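/- The resistance scaling factors are reciprocal: ρ^T = 1/ρ, i.e. lim_{n→∞} (1/n) log R_n^T = − lim_{n→∞} (1/n) log R_n. -/

import Mathlib

/-!
The two graphs are planar duals of each other, and this is what makes the two resistances reciprocal
up to bounded factors.

*Model.* The triangles of `T_n` are indexed by words `w : W n` of `n` permutations of `Fin 3`, and are
realized as the cells `cl n w` of the iterated barycentric subdivision of the standard simplex.
Working in barycentric coordinates gives the combinatorics of `T_n` (`face_to_face`, `shared_edge`)
by induction. The hexagonal embedding is the composition with a piecewise affine injective map
`Psi` (`hc_succ`, `Psi_inj`), under which the six sides of the hexagon become the six half sides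
`hs a b` of the simplex (`Psi_side`). Through `Psi` the energies of `G_n^T` and `G_n^H` are
comparable to the energies `ET` and `EH` summed over cells (`cT_bounds`, `cH_bounds`).

*Duality.* For `F` on vertices with values `α`, `β` on two opposite half sides, and `U` on midpoints
and centres with values `0`, `1` on the complementary pieces of the boundary, the discrete Green
formula (`green`) says that the signed sum of `dF · dU` over all cells is `β - α`; it is proved by
telescoping circulations under refinement. Cauchy–Schwarz gives `ET F * EH U ≥ (β - α) ^ 2`
(`ET_mul_EH`). For the harmonic `U` (`dual_field`), the flow `dU`, twisted by the orientation of the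
cells, is a closed `1`-form on `T_n`; by the discrete Poincaré lemma (`poincare`) it is the
differential of a conjugate function, for which equality holds (`dual`). Hence, with `CT` the
capacity for `ET`, `R_n` is comparable to `CT n` (`capH_bounds`) and `R_n^T` to `1 / CT n`
(`capT_bounds`).

*Existence of the limit.* `CT` is submultiplicative up to the factor `288` (`CT_submult`): from a test
function `f` on level `n` one builds a partition of unity `phi f` on the simplex whose `i`-th member
vanishes on the side opposite to vertex `i`; a test function on level `m` is extended into each
cell by means of it, and the energy multiplies (`cell_energy`, `submult`). Together with the
exponential lower bound `CT_lower`, Fekete's lemma shows that `log (CT n) / n` converges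
(`CT_limit`), and both limits follow by the comparison above (`log_limit`).
-/

/-!
Setup for the barycentric subdivision / hexacarpet resistance problem
(Begué, Kelleher, Nelson, Panzo, Pellico, Teplyaev, "Resistance scaling
and the number of spanning trees ..." / Barlow–Bass type estimates).

We realize the repeated barycentric subdivision of a triangle via its
hexagonal planar embedding: for `n ≥ 1` the complex `T_n` is embedded
in the plane with the seven vertices of `T_1` sent to the corners and
the center of a regular hexagon, and deeper subdivisions computed by
taking barycenters.  The `n`-th level triangles are recorded as ordered
triples of points of the plane.
-/

noncomputable section

namespace BarycentricHexacarpet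

attribute [local instance] Classical.propDecidable

/-- Points of the plane. -/
abbrev Pt : Type := ℝ × ℝ

/-- Barycenter of three points. -/
def bary (a b c : Pt) : Pt := (3:ℝ)⁻¹ • (a + b + c)

/-- Midpoint (barycenter of an edge). -/
def mpt (a b : Pt) : Pt := (2:ℝ)⁻¹ • (a + b)

/-- The six triangles of the barycentric subdivision of the triangle `(a,b,c)`,
each recorded as (vertex, barycenter of an edge containing it, barycenter). -/
def children : Pt × Pt × Pt → Set (Pt × Pt × Pt) := fun t =>
  {(t.1, mpt t.1 t.2.1, bary t.1 t.2.1 t.2.2), (t.2.1, mpt t.1 t.2.1, bary t.1 t.2.1 t.2.2),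
   (t.2.1, mpt t.2.1 t.2.2, bary t.1 t.2.1 t.2.2), (t.2.2, mpt t.2.1 t.2.2, bary t.1 t.2.1 t.2.2),
   (t.1, mpt t.1 t.2.2, bary t.1 t.2.1 t.2.2), (t.2.2, mpt t.1 t.2.2, bary t.1 t.2.1 t.2.2)}

/-- The corners of the regular hexagon: `p_0, p_0', p_1, p_1', p_2, p_2'`
are the corners with indices `0, 1, 2, 3, 4, 5`. -/
def hexCorner (i : ℕ) : Pt := (Real.cos (i * (Real.pi / 3)), Real.sin (i * (Real.pi / 3)))

/-- The set of (ordered) triangles of the `n`-th barycentric subdivision `T_n`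
of the triangle, in the hexagonal embedding (defined for `n ≥ 1`):  the six
triangles of `T_1` are the six sectors of the regular hexagon, and each further
subdivision is barycentric. -/
def TriSet : ℕ → Set (Pt × Pt × Pt)
  | 0 => ∅
  | 1 => {t | ∃ i : Fin 6, t = (hexCorner i, hexCorner (i + 1), ((0:ℝ), (0:ℝ)))}
  | (n + 2) => ⋃ t ∈ TriSet (n + 1), children t

/-- `E_n^2`: the 2-simplexes (triangles) of `T_n`, as 3-element vertex sets. -/
def Simp2 (n : ℕ) : Set (Set Pt) :=
  {s | ∃ t ∈ TriSet n, s = {t.1, t.2.1, t.2.2}}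

/-- `E_n^1`: the 1-simplexes (edges) of `T_n`, as 2-element vertex sets. -/
def Simp1 (n : ℕ) : Set (Set Pt) :=
  {s | ∃ t ∈ TriSet n, s = {t.1, t.2.1} ∨ s = {t.2.1, t.2.2} ∨ s = {t.1, t.2.2}}

/-- `E_n^0`: the 0-simplexes (vertices) of `T_n`. -/
def Simp0 (n : ℕ) : Set Pt :=
  {p | ∃ t ∈ TriSet n, p = t.1 ∨ p = t.2.1 ∨ p = t.2.2}

/-- Conductances of the 1-skeleton graph `G_n^T`:  vertices `p ≠ q` are adjacent
iff `{p,q}` is an edge of `T_n`; the conductance is `2` if the edge is contained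
in exactly one triangle of `T_n`, and `1` if it is contained in two triangles. -/
def cT (n : ℕ) (p q : Pt) : ℝ :=
  if p ≠ q ∧ ({p, q} : Set Pt) ∈ Simp1 n then
    (if {f ∈ Simp2 n | p ∈ f ∧ q ∈ f}.ncard = 1 then 2 else 1)
  else 0

/-- Conductances of the (modified) hexacarpet graph `G_n^H`:  its vertex set is
`E_n^2 ∪ E_n^1`, an edge `e ∈ E_n^1` is adjacent to a triangle `f ∈ E_n^2` iff
`e` is a face of `f`, and every edge of the graph has conductance `1/2`. -/
def cH (n : ℕ) (u v : Set Pt) : ℝ :=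
  if (u ∈ Simp1 n ∧ v ∈ Simp2 n ∧ u ⊆ v) ∨ (v ∈ Simp1 n ∧ u ∈ Simp2 n ∧ v ⊆ u)
  then 1 / 2 else 0

/-- The energy of a potential `f` on a weighted graph with conductances `c`:
`E(f) = (1/2) ∑ c p q * (f p - f q)^2`. -/
def energy {V : Type} (c : V → V → ℝ) (f : V → ℝ) : ℝ :=
  (1 / 2) * ∑' p : V, ∑' q : V, c p q * (f p - f q) ^ 2

/-- The effective resistance between `A` and `B`:
`R(A,B) = (inf {E(f) : f ≡ 0 on A, f ≡ 1 on B})⁻¹`. -/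
def effRes {V : Type} (c : V → V → ℝ) (A B : Set V) : ℝ :=
  (sInf {e : ℝ | ∃ f : V → ℝ, (∀ p ∈ A, f p = 0) ∧ (∀ p ∈ B, f p = 1) ∧ e = energy c f})⁻¹

/-- The `i`-th closed side of the hexagon. -/
def hexSide (i : ℕ) : Set Pt := segment ℝ (hexCorner i) (hexCorner (i + 1))

/-- `L_i^{(n,T)}`: the vertices of `G_n^T` whose geometric realization lies in
the `i`-th closed side of the hexagon. -/
def LsetT (n i : ℕ) : Set Pt := {p ∈ Simp0 n | p ∈ hexSide i}

/-- `L_i^{(n,H)}`: the vertices of `G_n^H` whose geometric realization lies in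
the `i`-th closed side of the hexagon. -/
def LsetH (n i : ℕ) : Set (Set Pt) :=
  {v ∈ Simp2 n ∪ Simp1 n | convexHull ℝ v ⊆ hexSide i}

/-- `R_n^T`: the effective resistance in `G_n^T` between
`A_{(n)}^T = L_2^{(n,T)}` and `B_{(n)}^T = L_5^{(n,T)}`. -/
def RT (n : ℕ) : ℝ := effRes (cT n) (LsetT n 2) (LsetT n 5)

/-- `R_n`: the effective resistance in `G_n^H` between
`A_{(n)}^H = L_0^{(n,H)} ∪ L_1^{(n,H)}` and `B_{(n)}^H = L_3^{(n,H)} ∪ L_4^{(n,H)}`. -/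
def RH (n : ℕ) : ℝ :=
  effRes (cH n) (LsetH n 0 ∪ LsetH n 1) (LsetH n 3 ∪ LsetH n 4)

end BarycentricHexacarpet

namespace BarycentricHexacarpet

/-! ### Words, subdivision cells and the face-to-face property -/

/-- Permutations of the three vertices of a triangle; they label the six cells of its subdivision. -/
abbrev P3 : Type := Equiv.Perm (Fin 3)

/-- Coordinate vectors; the relevant ones are barycentric coordinates of points of the simplex. -/
abbrev X : Type := Fin 3 → ℝ

section Gen
variable {V : Type*} [AddCommGroup V] [Module ℝ V]

/-- The child of the triangle `t` labelled `σ`: vertex `t (σ 0)`, midpoint of the edge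
`t (σ 0)`, `t (σ 1)`, and barycentre, in this order. -/
def sub (σ : P3) (t : Fin 3 → V) : Fin 3 → V :=
  ![t (σ 0), (2:ℝ)⁻¹ • (t (σ 0) + t (σ 1)), (3:ℝ)⁻¹ • (t (σ 0) + t (σ 1) + t (σ 2))]

/-- The affine combination of the vertices of `t` with coefficients `l`. -/
def comb (t : Fin 3 → V) (l : X) : V := l 0 • t 0 + l 1 • t 1 + l 2 • t 2

@[simp] lemma sub_zero' (σ : P3) (t : Fin 3 → V) : sub σ t 0 = t (σ 0) := rfl
@[simp] lemma sub_one' (σ : P3) (t : Fin 3 → V) :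
    sub σ t 1 = (2:ℝ)⁻¹ • (t (σ 0) + t (σ 1)) := rfl
@[simp] lemma sub_two' (σ : P3) (t : Fin 3 → V) :
    sub σ t 2 = (3:ℝ)⁻¹ • (t (σ 0) + t (σ 1) + t (σ 2)) := rfl

lemma sum_perm_vert {E : Type*} [AddCommGroup E] (σ : P3) (t : Fin 3 → E)
    : t (σ 0) + t (σ 1) + t (σ 2) = t 0 + t 1 + t 2 := by
  rw [← Fin.sum_univ_three (fun i => t (σ i)), ← Fin.sum_univ_three t]
  exact Equiv.sum_comp σ t

lemma sub_comp (σ π : P3) (t : Fin 3 → V) : sub σ (fun i => t (π i)) = sub (π * σ) t := rfl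

/-- Words of `n` permutations: the addresses of the `6 ^ n` cells of level `n`. -/
def W : ℕ → Type
  | 0 => Unit
  | n + 1 => W n × P3

instance instFW : ∀ n, Fintype (W n)
  | 0 => inferInstanceAs (Fintype Unit)
  | n + 1 => by
      have := instFW n
      exact inferInstanceAs (Fintype (W n × P3))

instance instDW : ∀ n, DecidableEq (W n)
  | 0 => inferInstanceAs (DecidableEq Unit)
  | n + 1 => by
      have := instDW n
      exact inferInstanceAs (DecidableEq (W n × P3))

lemma sum_W_zero (G : W 0 → ℝ) : ∑ w, G w = G () := by
  exact Finset.sum_singleton G ()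

lemma sum_W_succ {n : ℕ} (G : W (n+1) → ℝ) : ∑ w, G w = ∑ w : W n, ∑ σ : P3, G (w, σ) :=
  Fintype.sum_prod_type G

/-- The cell with address `w` in the iterated barycentric subdivision of `t`. Its vertices are ordered:
for `n ≥ 1` they come from a vertex, an edge and a triangle of the preceding level. -/
def cell (t : Fin 3 → V) : (n : ℕ) → W n → Fin 3 → V
  | 0, _ => t
  | n + 1, w => sub w.2 (cell t n w.1)

end Gen

/-- The standard simplex as an ordered triangle. -/
def unitTri : Fin 3 → X := fun i => Pi.single i 1

/-- Orientation of a cell relative to the initial triangle. -/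
def sgn : (n : ℕ) → W n → ℤˣ
  | 0, _ => 1
  | n + 1, w => sgn n w.1 * Equiv.Perm.sign w.2

/-- The cells of the standard simplex. -/
abbrev cl (n : ℕ) (w : W n) : Fin 3 → X := cell unitTri n w

/-- Coordinates in the parent, in the order given by the label of the child, of the point with
coordinates `l` in a child. They are nonincreasing when `l` is nonnegative. -/
def nu (l : X) : X := ![l 0 + l 1 / 2 + l 2 / 3, l 1 / 2 + l 2 / 3, l 2 / 3]

/-- The standard simplex. -/
def Splx : Set X := {x | (∀ i, 0 ≤ x i) ∧ x 0 + x 1 + x 2 = 1}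

lemma fin3_perm_cases (ρ : P3) (P : Prop)
    (h1 : ρ 0 = 0 → ρ 1 = 1 → ρ 2 = 2 → P) (h2 : ρ 0 = 0 → ρ 1 = 2 → ρ 2 = 1 → P)
    (h3 : ρ 0 = 1 → ρ 1 = 0 → ρ 2 = 2 → P) (h4 : ρ 0 = 1 → ρ 1 = 2 → ρ 2 = 0 → P)
    (h5 : ρ 0 = 2 → ρ 1 = 0 → ρ 2 = 1 → P) (h6 : ρ 0 = 2 → ρ 1 = 1 → ρ 2 = 0 → P) : P := by
  have key : ∀ ρ : P3, (ρ 0 = 0 ∧ ρ 1 = 1 ∧ ρ 2 = 2) ∨ (ρ 0 = 0 ∧ ρ 1 = 2 ∧ ρ 2 = 1) ∨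
    (ρ 0 = 1 ∧ ρ 1 = 0 ∧ ρ 2 = 2) ∨ (ρ 0 = 1 ∧ ρ 1 = 2 ∧ ρ 2 = 0) ∨
    (ρ 0 = 2 ∧ ρ 1 = 0 ∧ ρ 2 = 1) ∨ (ρ 0 = 2 ∧ ρ 1 = 1 ∧ ρ 2 = 0) := by decide
  rcases key ρ with h | h | h | h | h | h
  exacts [h1 h.1 h.2.1 h.2.2, h2 h.1 h.2.1 h.2.2, h3 h.1 h.2.1 h.2.2, h4 h.1 h.2.1 h.2.2,
    h5 h.1 h.2.1 h.2.2, h6 h.1 h.2.1 h.2.2]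

lemma perm3_ext {σ τ : P3} (h0 : σ 0 = τ 0) (h2 : σ 2 = τ 2) : σ = τ := by
  revert σ τ; decide

lemma perm3_ext' {σ τ : P3} (h0 : σ 0 = τ 0) (h1 : σ 1 = τ 1) : σ = τ := by
  revert σ τ; decide

lemma sum_perm3 (G : P3 → ℝ) : ∑ σ, G σ = G 1 + G (Equiv.swap 0 1) + G (Equiv.swap 0 2) +
    G (Equiv.swap 1 2) + G (Equiv.swap 0 1 * Equiv.swap 1 2) +
    G (Equiv.swap 1 2 * Equiv.swap 0 1) := by
  have : (Finset.univ : Finset P3) = {1, Equiv.swap 0 1, Equiv.swap 0 2, Equiv.swap 1 2,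
    Equiv.swap 0 1 * Equiv.swap 1 2, Equiv.swap 1 2 * Equiv.swap 0 1} := by decide
  rw [this, Finset.sum_insert (by decide), Finset.sum_insert (by decide),
    Finset.sum_insert (by decide), Finset.sum_insert (by decide), Finset.sum_insert (by decide),
    Finset.sum_singleton]
  ring

/-- A vector determines its nonincreasing rearrangement, and a strict first (last) gap determines which
coordinate is the largest (smallest). -/
lemma sort_lemma (a b : X) (σ τ : P3) (ha1 : a 1 ≤ a 0) (ha2 : a 2 ≤ a 1)
    (hb1 : b 1 ≤ b 0) (hb2 : b 2 ≤ b 1) (h : ∀ k, a (σ.symm k) = b (τ.symm k)) :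
    a = b ∧ (a 1 < a 0 → σ 0 = τ 0) ∧ (a 2 < a 1 → σ 2 = τ 2) := by
  have h' : ∀ j, a j = b ((τ⁻¹ * σ) j) := fun j => by
    have := h (σ j)
    rw [Equiv.symm_apply_apply] at this
    exact this
  have e0 : ∀ j, (τ⁻¹ * σ) j = j → σ j = τ j := fun j hj => by
    have : τ ((τ⁻¹ * σ) j) = σ j := by simp
    rw [← this, hj]
  generalize hρ : τ⁻¹ * σ = ρ at h' e0
  have q0 := h' 0; have q1 := h' 1; have q2 := h' 2
  have aux : a 0 = b 0 ∧ a 1 = b 1 ∧ a 2 = b 2 ∧ (a 1 < a 0 → ρ 0 = 0) ∧ (a 2 < a 1 → ρ 2 = 2) := by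
    apply fin3_perm_cases ρ <;> intro r0 r1 r2 <;> rw [r0] at q0 <;> rw [r1] at q1 <;>
      rw [r2] at q2 <;> rw [r0, r2] <;>
      refine ⟨by linarith, by linarith, by linarith, fun h => ?_, fun h => ?_⟩ <;>
      first | rfl | (exfalso; linarith)
  obtain ⟨a0, a1, a2, h0, h2⟩ := aux
  refine ⟨?_, fun h => e0 0 (h0 h), fun h => e0 2 (h2 h)⟩
  funext i; fin_cases i <;> assumption

section Gen
variable {V : Type*} [AddCommGroup V] [Module ℝ V]

lemma comb_perm (t : Fin 3 → V) (a : X) (σ : P3) :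
    comb t (fun k => a (σ.symm k)) = a 0 • t (σ 0) + a 1 • t (σ 1) + a 2 • t (σ 2) := by
  have := Equiv.sum_comp σ (fun k => a (σ.symm k) • t k)
  simp only [Equiv.symm_apply_apply, Fin.sum_univ_three] at this
  rw [comb, ← this]

/-- Passage from the coordinates in a child to those in its parent. -/
lemma comb_sub (σ : P3) (t : Fin 3 → V) (l : X) :
    comb (sub σ t) l = comb t (fun k => nu l (σ.symm k)) := by
  rw [comb_perm]
  simp only [comb, nu, sub_zero', sub_one', sub_two', Matrix.cons_val_zero, Matrix.cons_val_one,
    Matrix.cons_val]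
  module

lemma comb_single (t : Fin 3 → V) (i : Fin 3) : comb t (Pi.single i 1) = t i := by
  fin_cases i <;> simp [comb]

end Gen

lemma comb_unitTri (l : X) : comb unitTri l = l := by
  funext i; fin_cases i <;> simp [comb, unitTri]

lemma nu_mem {l : X} (h : l ∈ Splx) (σ : P3) : (fun k => nu l (σ.symm k)) ∈ Splx := by
  obtain ⟨h0, h1⟩ := h
  have a := h0 0; have b := h0 1; have c := h0 2
  constructor
  · have : ∀ j, 0 ≤ nu l j := by
      intro j; fin_cases j <;> simp [nu] <;> positivity
    exact fun i => this _
  · rw [sum_perm_vert σ.symm (nu l)]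
    simp [nu]; linarith

/-- The face-to-face property: a point lying in two cells has the same coordinates in both, the cells
share each vertex of positive coefficient, and they coincide if all coefficients are positive. -/
lemma face_to_face : ∀ (n : ℕ) (w w' : W n) (l l' : X), l ∈ Splx → l' ∈ Splx →
    comb (cl n w) l = comb (cl n w') l' →
    l = l' ∧ (∀ i, 0 < l i → cl n w i = cl n w' i) ∧ ((∀ i, 0 < l i) → w = w')
  | 0, w, w', l, l', hl, hl', h => by
      rw [show cl 0 w = unitTri from rfl, show cl 0 w' = unitTri from rfl, comb_unitTri,
        comb_unitTri] at h
      exact ⟨h, fun i _ => rfl, fun _ => rfl⟩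
  | n + 1, (w, σ), (w', σ'), l, l', hl, hl', h => by
      have h1 : comb (sub σ (cl n w)) l = comb (sub σ' (cl n w')) l' := h
      rw [comb_sub, comb_sub] at h1
      obtain ⟨hm, hv, hw⟩ := face_to_face n w w' _ _ (nu_mem hl σ) (nu_mem hl' σ') h1
      have hk := fun k => congrFun hm k
      have a := hl.1 0; have b := hl.1 1; have c := hl.1 2
      have a' := hl'.1 0; have b' := hl'.1 1; have c' := hl'.1 2
      have n0 : ∀ l : X, nu l 0 = l 0 + l 1 / 2 + l 2 / 3 := fun _ => rfl
      have n1 : ∀ l : X, nu l 1 = l 1 / 2 + l 2 / 3 := fun _ => rfl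
      have n2 : ∀ l : X, nu l 2 = l 2 / 3 := fun _ => rfl
      obtain ⟨hnu, hs0, hs2⟩ := sort_lemma (nu l) (nu l') σ σ'
        (by rw [n0, n1]; linarith) (by rw [n2, n1]; linarith)
        (by rw [n0, n1]; linarith) (by rw [n2, n1]; linarith) hk
      have e0 := congrFun hnu 0; have e1 := congrFun hnu 1; have e2 := congrFun hnu 2
      rw [n0, n0] at e0; rw [n1, n1] at e1; rw [n2, n2] at e2
      have hll : l = l' := by
        funext i; fin_cases i
        · show l 0 = l' 0; linarith
        · show l 1 = l' 1; linarith
        · show l 2 = l' 2; linarith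
      have hv' : ∀ j, 0 < nu l j → cl n w (σ j) = cl n w' (σ j) := fun j hj =>
        hv (σ j) (by simpa using hj)
      rw [n0, n1] at hs0
      rw [n1, n2] at hs2
      refine ⟨hll, ?_, ?_⟩
      · intro i
        fin_cases i <;> intro hi
        · change 0 < l 0 at hi
          show cl n w (σ 0) = cl n w' (σ' 0)
          rw [← hs0 (by linarith)]
          exact hv' 0 (by rw [n0]; linarith)
        · change 0 < l 1 at hi
          have s2 := hs2 (by linarith)
          show (2:ℝ)⁻¹ • (cl n w (σ 0) + cl n w (σ 1)) = (2:ℝ)⁻¹ • (cl n w' (σ' 0) + cl n w' (σ' 1))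
          rw [hv' 0 (by rw [n0]; linarith), hv' 1 (by rw [n1]; linarith)]
          have p1 := sum_perm_vert σ (cl n w')
          rw [← sum_perm_vert σ' (cl n w'), s2] at p1
          rw [add_right_cancel p1]
        · change 0 < l 2 at hi
          have hww : w = w' := hw fun i => by
            have : ∀ j, 0 < nu l j := by
              intro j; fin_cases j
              · show 0 < nu l 0; rw [n0]; linarith
              · show 0 < nu l 1; rw [n1]; linarith
              · show 0 < nu l 2; rw [n2]; linarith
            exact this _
          show (3:ℝ)⁻¹ • (cl n w (σ 0) + cl n w (σ 1) + cl n w (σ 2)) =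
            (3:ℝ)⁻¹ • (cl n w' (σ' 0) + cl n w' (σ' 1) + cl n w' (σ' 2))
          rw [sum_perm_vert, sum_perm_vert, hww]
      · intro hp
        have p0 := hp 0; have p1 := hp 1; have p2 := hp 2
        have hww : w = w' := hw fun i => by
          have : ∀ j, 0 < nu l j := by
            intro j; fin_cases j
            · show 0 < nu l 0; rw [n0]; linarith
            · show 0 < nu l 1; rw [n1]; linarith
            · show 0 < nu l 2; rw [n2]; linarith
          exact this _
        rw [hww, perm3_ext (hs0 (by linarith)) (hs2 (by linarith))]

/-! ### Midpoints, centres and common edges -/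

section Gen
variable {V : Type*} [AddCommGroup V] [Module ℝ V]

/-- The midpoint of two points. -/
def md (a b : V) : V := (2:ℝ)⁻¹ • (a + b)

lemma md_comm (a b : V) : md a b = md b a := by rw [md, md, add_comm]

/-- The midpoint of the edge opposite to vertex `i`. -/
def emid (t : Fin 3 → V) (i : Fin 3) : V := md (t (i + 1)) (t (i + 2))

/-- The barycentre of a triangle. -/
def ctr (t : Fin 3 → V) : V := (3:ℝ)⁻¹ • (t 0 + t 1 + t 2)

/-- Barycentric coordinates of the midpoint of the edge opposite to vertex `i`. -/
def lmid (i : Fin 3) : X := fun j => if j = i then 0 else 2⁻¹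
/-- Barycentric coordinates of the barycentre. -/
def lctr : X := fun _ => 3⁻¹

lemma comb_lmid (t : Fin 3 → V) (i : Fin 3) : comb t (lmid i) = emid t i := by
  fin_cases i <;> simp [comb, lmid, emid, md]
  · abel

lemma comb_lctr (t : Fin 3 → V) : comb t lctr = ctr t := by
  simp [comb, lctr, ctr]

lemma comb_add_smul (t : Fin 3 → V) (a b : X) (r : ℝ) :
    comb t (r • (a + b)) = r • (comb t a + comb t b) := by
  simp only [comb, Pi.smul_apply, Pi.add_apply, smul_eq_mul]; module

lemma comb_sub_vert (t : Fin 3 → V) (s : Fin 3 → X) (σ : P3) (j : Fin 3) :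
    comb t (sub σ s j) = sub σ (fun i => comb t (s i)) j := by
  fin_cases j
  · rfl
  · simp only [Fin.mk_one, sub_one', comb, Pi.smul_apply, Pi.add_apply, smul_eq_mul]; module
  · simp only [Fin.reduceFinMk, sub_two', comb, Pi.smul_apply, Pi.add_apply, smul_eq_mul]; module

/-- Subdivision commutes with affine maps. -/
lemma comb_cell (t : Fin 3 → V) (s : Fin 3 → X) :
    ∀ (n : ℕ) (w : W n) (j : Fin 3), comb t (cell s n w j) = cell (fun i => comb t (s i)) n w j
  | 0, _, _ => rfl
  | n + 1, (w, σ), j => by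
      show comb t (sub σ (cell s n w) j) = sub σ (cell (fun i => comb t (s i)) n w) j
      rw [comb_sub_vert]
      congr 1
      funext i
      exact comb_cell t s n w i

/-- Every subdivision is the affine image of that of the standard simplex. -/
lemma cell_eq_comb (t : Fin 3 → V) (n : ℕ) (w : W n) (j : Fin 3) :
    cell t n w j = comb t (cl n w j) := by
  rw [cl, comb_cell]
  congr 1
  funext i
  rw [unitTri, comb_single]

/-- The cells of level `m + n` are the cells of level `n` of the cells of level `m`. -/
lemma sum_cell_add (t : Fin 3 → V) (m : ℕ) : ∀ (n : ℕ) (G : (Fin 3 → V) → ℝ),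
    ∑ w : W (m + n), G (cell t (m + n) w) = ∑ w : W m, ∑ w' : W n, G (cell (cell t m w) n w')
  | 0, G => by
      refine Finset.sum_congr rfl fun w _ => ?_
      rw [sum_W_zero]; rfl
  | n + 1, G => by
      have := sum_cell_add t m n (fun s => ∑ σ, G (sub σ s))
      rw [show m + (n + 1) = m + n + 1 from rfl, sum_W_succ]
      refine this.trans (Finset.sum_congr rfl fun w _ => ?_)
      rw [sum_W_succ]; rfl

/-- Reordering the vertices of the initial triangle permutes its cells. -/
lemma sum_cell_perm (t : Fin 3 → V) (π : P3) : ∀ (n : ℕ) (G : (Fin 3 → V) → ℝ),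
    (∀ (s : Fin 3 → V) (ρ : P3), G (fun i => s (ρ i)) = G s) →
    ∑ w : W n, G (cell (fun i => t (π i)) n w) = ∑ w : W n, G (cell t n w)
  | 0, G, hG => by
      rw [sum_W_zero, sum_W_zero]; exact hG t π
  | n + 1, G, hG => by
      rw [sum_W_succ, sum_W_succ]
      refine sum_cell_perm t π n (fun s => ∑ σ, G (sub σ s)) fun s ρ => ?_
      simp only [sub_comp]
      exact Equiv.sum_comp (Equiv.mulLeft ρ) (fun σ => G (sub σ s))

end Gen

lemma lmid_mem (i : Fin 3) : lmid i ∈ Splx := by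
  constructor
  · intro j; unfold lmid; split_ifs <;> norm_num
  · fin_cases i <;> simp [lmid] <;> norm_num

lemma lctr_mem : lctr ∈ Splx := by
  constructor
  · intro j; unfold lctr; norm_num
  · simp [lctr]; norm_num

lemma single_mem (i : Fin 3) : (Pi.single i 1 : X) ∈ Splx := by
  constructor
  · intro j; by_cases h : j = i
    · subst h; simp
    · simp [h]
  · fin_cases i <;> simp

/-- A vertex has the same position in every cell containing it. -/
lemma vtx_inj {n : ℕ} {w w' : W n} {i j : Fin 3} (h : cl n w i = cl n w' j) : i = j := by
  have := (face_to_face n w w' (Pi.single i 1) (Pi.single j 1) (single_mem i) (single_mem j)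
    (by rw [comb_single, comb_single]; exact h)).1
  by_contra hij
  have h2 := congrFun this i
  simp [hij] at h2

lemma ctr_inj {n : ℕ} {w w' : W n} (h : ctr (cl n w) = ctr (cl n w')) : w = w' :=
  (face_to_face n w w' lctr lctr lctr_mem lctr_mem
    (by rw [comb_lctr, comb_lctr]; exact h)).2.2 (fun i => by unfold lctr; norm_num)

lemma tri_inj {n : ℕ} {w w' : W n} (h : cl n w = cl n w') : w = w' := ctr_inj (by rw [h])

lemma lmid_pos {i j : Fin 3} (h : j ≠ i) : 0 < lmid i j := by
  simp [lmid, h]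

lemma emid_inj {n : ℕ} {w w' : W n} {i j : Fin 3} (h : emid (cl n w) i = emid (cl n w') j) :
    i = j ∧ ∀ k, k ≠ i → cl n w k = cl n w' k := by
  have := (face_to_face n w w' (lmid i) (lmid j) (lmid_mem i) (lmid_mem j)
    (by rw [comb_lmid, comb_lmid]; exact h))
  refine ⟨?_, fun k hk => this.2.1 k (lmid_pos hk)⟩
  by_contra hij
  have h2 := congrFun this.1 i
  simp [lmid, hij] at h2

lemma emid_ne_ctr {n : ℕ} {w w' : W n} {i : Fin 3} : emid (cl n w) i ≠ ctr (cl n w') := by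
  intro h
  have := (face_to_face n w w' (lmid i) lctr (lmid_mem i) lctr_mem
    (by rw [comb_lmid, comb_lctr]; exact h)).1
  have h2 := congrFun this i
  simp [lmid, lctr] at h2

/-- The vertices of the cells lie in the simplex. -/
lemma cl_mem : ∀ (n : ℕ) (w : W n) (j : Fin 3), cl n w j ∈ Splx
  | 0, _, j => single_mem j
  | n + 1, (w, σ), j => by
      have ih := cl_mem n w
      have a := ih (σ 0); have b := ih (σ 1); have c := ih (σ 2)
      show sub σ (cl n w) j ∈ Splx
      constructor
      · intro k
        have a := a.1 k; have b := b.1 k; have c := c.1 k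
        fin_cases j
        · exact a
        · simp; positivity
        · simp; positivity
      · have a := a.2; have b := b.2; have c := c.2
        fin_cases j
        · exact a
        · simp; linarith
        · simp; linarith

lemma comb_mem {t : Fin 3 → X} (ht : ∀ i, t i ∈ Splx) {l : X} (hl : l ∈ Splx) :
    comb t l ∈ Splx := by
  have a := ht 0; have b := ht 1; have c := ht 2
  have d := hl.1 0; have e := hl.1 1; have f := hl.1 2
  constructor
  · intro k
    have a := a.1 k; have b := b.1 k; have c := c.1 k
    simp [comb]; positivity
  · have a := a.2; have b := b.2; have c := c.2
    simp [comb]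
    linear_combination l 0 * a + l 1 * b + l 2 * c + hl.2

lemma ctr_pos : ∀ (n : ℕ) (w : W n) (k : Fin 3), 0 < ctr (cl n w) k
  | 0, _, k => by
      show 0 < ctr unitTri k
      fin_cases k <;> simp [ctr, unitTri]
  | n + 1, (w, σ), k => by
      have ih := ctr_pos n w k
      have a := (cl_mem (n+1) (w, σ) 0).1 k
      have b := (cl_mem (n+1) (w, σ) 1).1 k
      have c : 0 < cl (n+1) (w, σ) 2 k := by
        show 0 < ((3:ℝ)⁻¹ • (cl n w (σ 0) + cl n w (σ 1) + cl n w (σ 2))) k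
        rw [sum_perm_vert]; exact ih
      simp only [ctr, Pi.smul_apply, Pi.add_apply, smul_eq_mul]; positivity

lemma vtx2_pos (n : ℕ) (w : W (n+1)) (k : Fin 3) : 0 < cl (n+1) w 2 k := by
  show 0 < ((3:ℝ)⁻¹ • (cl n w.1 (w.2 0) + cl n w.1 (w.2 1) + cl n w.1 (w.2 2))) k
  rw [sum_perm_vert]; exact ctr_pos n w.1 k

lemma ctr_eq_of_sub {n : ℕ} {w w' : W n} {σ σ' : P3}
    (h : sub σ (cl n w) 2 = sub σ' (cl n w') 2) : w = w' := by
  apply ctr_inj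
  rw [sub_two', sub_two', sum_perm_vert, sum_perm_vert] at h
  exact h

lemma sub_one_eq {n : ℕ} {w w' : W n} {σ σ' : P3}
    (h : sub σ (cl n w) 1 = sub σ' (cl n w') 1) :
    σ 2 = σ' 2 ∧ ∀ k, k ≠ σ 2 → cl n w k = cl n w' k := by
  have e : ∀ (σ : P3) (w : W n), sub σ (cl n w) 1 = emid (cl n w) (σ 2) := by
    intro σ w
    rw [sub_one']
    have : (σ 2 + 1 = σ 0 ∧ σ 2 + 2 = σ 1) ∨ (σ 2 + 1 = σ 1 ∧ σ 2 + 2 = σ 0) := by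
      revert σ; decide
    rcases this with h | h
    · rw [emid, h.1, h.2]; rfl
    · rw [emid, h.1, h.2, md_comm]; rfl
  rw [e, e] at h
  exact emid_inj h

/-- Two different cells with a common edge have opposite orientation, and the midpoint of the edge lies
in the interior of the simplex. -/
lemma shared_edge : ∀ (n : ℕ) (w w' : W n) (i : Fin 3), w ≠ w' →
    cl n w (i + 1) = cl n w' (i + 1) → cl n w (i + 2) = cl n w' (i + 2) →
    sgn n w' = - sgn n w ∧ ∀ k, 0 < cl n w (i + 1) k + cl n w (i + 2) k
  | 0, w, w', _, h, _, _ => absurd (show w = w' from rfl) h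
  | n + 1, (w, σ), (w', σ'), i, hne, h1, h2 => by
      have key2 : ∀ σ σ' : P3, σ 2 = σ' 2 → σ ≠ σ' → Equiv.Perm.sign σ' = - Equiv.Perm.sign σ := by
        decide
      have key0 : ∀ σ σ' : P3, σ 0 = σ' 0 → σ ≠ σ' → Equiv.Perm.sign σ' = - Equiv.Perm.sign σ := by
        decide
      have key : ∀ σ : P3,
          (σ 2 + 1 = σ 0 ∧ σ 2 + 2 = σ 1) ∨ (σ 2 + 1 = σ 1 ∧ σ 2 + 2 = σ 0) := by decide
      have q1 : ∀ a : Fin 3, a + 1 ≠ a := by decide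
      have q2 : ∀ a : Fin 3, a + 2 ≠ a := by decide
      have nn := fun j k => (cl_mem (n+1) (w, σ) j).1 k
      have p2 := vtx2_pos n (w, σ)
      show sgn n w' * Equiv.Perm.sign σ' = - (sgn n w * Equiv.Perm.sign σ) ∧ _
      fin_cases i
      · change cl (n+1) (w, σ) 1 = cl (n+1) (w', σ') 1 at h1
        change cl (n+1) (w, σ) 2 = cl (n+1) (w', σ') 2 at h2
        obtain rfl := ctr_eq_of_sub h2
        have hσ : σ ≠ σ' := fun h => hne (by rw [h])
        refine ⟨by rw [key2 σ σ' (sub_one_eq h1).1 hσ, mul_neg], fun k => ?_⟩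
        exact add_pos_of_nonneg_of_pos (nn 1 k) (p2 k)
      · change cl (n+1) (w, σ) 2 = cl (n+1) (w', σ') 2 at h1
        change cl (n+1) (w, σ) 0 = cl (n+1) (w', σ') 0 at h2
        obtain rfl := ctr_eq_of_sub h1
        have hσ : σ ≠ σ' := fun h => hne (by rw [h])
        refine ⟨by rw [key0 σ σ' (vtx_inj h2) hσ, mul_neg], fun k => ?_⟩
        exact add_pos_of_pos_of_nonneg (p2 k) (nn 0 k)
      · change cl (n+1) (w, σ) 0 = cl (n+1) (w', σ') 0 at h1
        change cl (n+1) (w, σ) 1 = cl (n+1) (w', σ') 1 at h2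
        have hs := sub_one_eq h2
        obtain rfl := perm3_ext (vtx_inj h1) hs.1
        have hw : w ≠ w' := fun h => hne (by rw [h])
        have hA : cl n w (σ 2 + 1) = cl n w' (σ 2 + 1) := hs.2 _ (q1 (σ 2))
        have hB : cl n w (σ 2 + 2) = cl n w' (σ 2 + 2) := hs.2 _ (q2 (σ 2))
        obtain ⟨ih1, ih2⟩ := shared_edge n w w' (σ 2) hw hA hB
        refine ⟨by rw [ih1, neg_mul], fun k => ?_⟩
        have e0 : cl (n+1) (w, σ) 0 k = cl n w (σ 0) k := rfl
        have e1 : cl (n+1) (w, σ) 1 k = (2:ℝ)⁻¹ * (cl n w (σ 0) k + cl n w (σ 1) k) := rfl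
        have i2 := ih2 k
        have a := (cl_mem n w (σ 0)).1 k
        have b := (cl_mem n w (σ 1)).1 k
        show 0 < cl (n+1) (w, σ) 0 k + cl (n+1) (w, σ) 1 k
        rw [e0, e1]
        rcases key σ with h | h <;> rw [h.1, h.2] at i2 <;> linarith

/-! ### Energies, half sides and the discrete Green formula -/

/-- The half of the side joining the vertices `a` and `b` that is nearer to `a`. -/
def hs (a b : Fin 3) : Set X := {x | x ∈ Splx ∧ x a + x b = 1 ∧ x b ≤ x a}

/-- From level `1` on, each cell lies on one side of every median of the simplex, that is, two given
coordinates are ordered in the same way at all its vertices. -/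
lemma chamber : ∀ (n : ℕ) (w : W (n + 1)) (a b : Fin 3),
    (∀ j, cl (n + 1) w j a ≤ cl (n + 1) w j b) ∨ (∀ j, cl (n + 1) w j b ≤ cl (n + 1) w j a)
  | 0, (w, σ), a, b => by
      have key : ∀ (i k : Fin 3), i ≤ k → ∀ j, sub σ unitTri j (σ k) ≤ sub σ unitTri j (σ i) := by
        intro i k hik j
        fin_cases j <;> fin_cases i <;> fin_cases k <;>
          first
          | (simp [unitTri, σ.injective.eq_iff]; done)
          | (exfalso; revert hik; decide)
      rcases le_total (σ.symm a) (σ.symm b) with h | h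
      · right; intro j
        have := key _ _ h j
        rw [Equiv.apply_symm_apply, Equiv.apply_symm_apply] at this
        exact this
      · left; intro j
        have := key _ _ h j
        rw [Equiv.apply_symm_apply, Equiv.apply_symm_apply] at this
        exact this
  | n + 1, (w, σ), a, b => by
      have gen : ∀ a b, (∀ j, cl (n + 1) w j a ≤ cl (n + 1) w j b) →
          ∀ j, sub σ (cl (n + 1) w) j a ≤ sub σ (cl (n + 1) w) j b := by
        intro a b h j
        have h0 := h (σ 0); have h1 := h (σ 1); have h2 := h (σ 2)
        fin_cases j
        · exact h0
        · simp; linarith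
        · simp; linarith
      rcases chamber n w a b with h | h
      · exact Or.inl (gen _ _ h)
      · exact Or.inr (gen _ _ h)

/-- Energy of a function on the three edges of a triangle. -/
def dE (g : X → ℝ) (c : Fin 3 → X) : ℝ := ∑ i : Fin 3, (g (c (i + 2)) - g (c (i + 1))) ^ 2

/-- Energy on the triangulation, summed over cells; interior edges are thus counted twice. -/
def ET (n : ℕ) (g : X → ℝ) : ℝ := ∑ w : W n, dE g (cl n w)

/-- Energy on the hexacarpet, whose vertices are represented by edge midpoints and centres of cells. -/
def EH (n : ℕ) (U : X → ℝ) : ℝ :=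
  ∑ w : W n, ∑ i : Fin 3, (U (emid (cl n w) i) - U (ctr (cl n w))) ^ 2

/-- Boundary conditions for the triangulation, on two opposite sides of the hexagon. -/
def TestT (α β : ℝ) (g : X → ℝ) : Prop := (∀ x ∈ hs 1 2, g x = α) ∧ ∀ x ∈ hs 0 2, g x = β

/-- The part of the boundary that corresponds to sides `0` and `1` of the hexagon. -/
def sA : Set X := {x | x ∈ Splx ∧ x 2 = 0}
/-- The part of the boundary that corresponds to sides `3` and `4` of the hexagon. -/
def sB : Set X := hs 2 1 ∪ hs 2 0

/-- Boundary conditions for the hexacarpet. -/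
def TestH (U : X → ℝ) : Prop := (∀ x ∈ sA, U x = 0) ∧ ∀ x ∈ sB, U x = 1

section Green

/-- The edge functional obtained by applying `J` to the two halves of an edge. -/
def refn (J : X → X → ℝ) : X → X → ℝ := fun a b => J a (md a b) + J (md a b) b

lemma refn_anti {J : X → X → ℝ} (hJ : ∀ p q, J q p = - J p q) (p q : X) :
    refn J q p = - refn J p q := by
  simp only [refn, md_comm q p]
  rw [hJ (md p q) q, hJ p (md p q)]; ring

/-- The circulation of an edge functional round a triangle. -/
def loop (J : X → X → ℝ) (t : Fin 3 → X) : ℝ := J (t 0) (t 1) + J (t 1) (t 2) + J (t 2) (t 0)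

/-- The interior edges of the subdivision cancel in the signed sum of the circulations round the six
children. -/
lemma loop_refine {J : X → X → ℝ} (hJ : ∀ p q, J q p = - J p q) (t : Fin 3 → X) :
    ∑ σ : P3, ((Equiv.Perm.sign σ : ℤ) : ℝ) * loop J (sub σ t) = loop (refn J) t := by
  have c : ∀ σ : P3, sub σ t 2 = ctr t := fun σ => by
    rw [sub_two', sum_perm_vert]; rfl
  have m : ∀ σ : P3, sub σ t 1 = md (t (σ 0)) (t (σ 1)) := fun σ => rfl
  have v : ∀ σ : P3, sub σ t 0 = t (σ 0) := fun σ => rfl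
  have s : ((Equiv.Perm.sign (1:P3) : ℤ) : ℝ) = 1 ∧
    ((Equiv.Perm.sign (Equiv.swap 0 1:P3) : ℤ) : ℝ) = -1 ∧
    ((Equiv.Perm.sign (Equiv.swap 0 2:P3) : ℤ) : ℝ) = -1 ∧
    ((Equiv.Perm.sign (Equiv.swap 1 2:P3) : ℤ) : ℝ) = -1 ∧
    ((Equiv.Perm.sign (Equiv.swap 0 1 * Equiv.swap 1 2:P3) : ℤ) : ℝ) = 1 ∧
    ((Equiv.Perm.sign (Equiv.swap 1 2 * Equiv.swap 0 1:P3) : ℤ) : ℝ) = 1 := by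
    have : ((Equiv.Perm.sign (1:P3) : ℤ)) = 1 ∧
    ((Equiv.Perm.sign (Equiv.swap 0 1:P3) : ℤ)) = -1 ∧
    ((Equiv.Perm.sign (Equiv.swap 0 2:P3) : ℤ)) = -1 ∧
    ((Equiv.Perm.sign (Equiv.swap 1 2:P3) : ℤ)) = -1 ∧
    ((Equiv.Perm.sign (Equiv.swap 0 1 * Equiv.swap 1 2:P3) : ℤ)) = 1 ∧
    ((Equiv.Perm.sign (Equiv.swap 1 2 * Equiv.swap 0 1:P3) : ℤ)) = 1 := by decide
    exact_mod_cast this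
  obtain ⟨s1, s2, s3, s4, s5, s6⟩ := s
  rw [sum_perm3, s1, s2, s3, s4, s5, s6]
  simp only [loop, c, m, v, refn]
  have e1 : ((1:P3) 0 = 0) ∧ ((1:P3) 1 = 1) := by decide
  have e2 : ((Equiv.swap 0 1:P3) 0 = 1) ∧ ((Equiv.swap 0 1:P3) 1 = 0) := by decide
  have e3 : ((Equiv.swap 0 2:P3) 0 = 2) ∧ ((Equiv.swap 0 2:P3) 1 = 1) := by decide
  have e4 : ((Equiv.swap 1 2:P3) 0 = 0) ∧ ((Equiv.swap 1 2:P3) 1 = 2) := by decide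
  have e5 : ((Equiv.swap 0 1 * Equiv.swap 1 2:P3) 0 = 1) ∧
    ((Equiv.swap 0 1 * Equiv.swap 1 2:P3) 1 = 2) := by decide
  have e6 : ((Equiv.swap 1 2 * Equiv.swap 0 1:P3) 0 = 2) ∧
    ((Equiv.swap 1 2 * Equiv.swap 0 1:P3) 1 = 0) := by decide
  rw [e1.1, e1.2, e2.1, e2.2, e3.1, e3.2, e4.1, e4.2, e5.1, e5.2, e6.1, e6.2]
  rw [md_comm (t 1) (t 0), md_comm (t 2) (t 1), md_comm (t 0) (t 2)]
  rw [hJ (md (t 0) (t 1)) (t 1), hJ (md (t 1) (t 2)) (t 2), hJ (md (t 2) (t 0)) (t 0)]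
  ring

/-- Stokes formula: the signed sum of the circulations round all cells of level `n` only sees the
sides of `t`, subdivided `n` times. -/
lemma loop_sum (t : Fin 3 → X) : ∀ (n : ℕ) (J : X → X → ℝ), (∀ p q, J q p = - J p q) →
    ∑ w : W n, ((sgn n w : ℤ) : ℝ) * loop J (cell t n w) = loop (refn^[n] J) t
  | 0, J, _ => by
      rw [sum_W_zero]; simp [sgn, cell]
  | n + 1, J, hJ => by
      rw [sum_W_succ, Function.iterate_succ_apply, ← loop_sum t n (refn J) (refn_anti hJ)]
      refine Finset.sum_congr rfl fun w _ => ?_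
      rw [← loop_refine hJ, Finset.mul_sum]
      refine Finset.sum_congr rfl fun σ _ => ?_
      show (((sgn n w * Equiv.Perm.sign σ : ℤˣ) : ℤ) : ℝ) * loop J (sub σ (cell t n w)) = _
      push_cast; ring

/-- An edge functional that is a difference on a midpoint-convex set telescopes under refinement. -/
lemma refn_iter {C : Set X} (hC : ∀ p ∈ C, ∀ q ∈ C, md p q ∈ C) (φ : X → ℝ) :
    ∀ (n : ℕ) (J : X → X → ℝ), (∀ p ∈ C, ∀ q ∈ C, J p q = φ q - φ p) →
    ∀ p ∈ C, ∀ q ∈ C, refn^[n] J p q = φ q - φ p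
  | 0, _, h => h
  | n + 1, J, h => by
      rw [Function.iterate_succ_apply]
      refine refn_iter hC φ n _ fun p hp q hq => ?_
      have := hC p hp q hq
      rw [refn, h p hp _ this, h _ this q hq]; ring

lemma md_apply (p q : X) (k : Fin 3) : md p q k = 2⁻¹ * (p k + q k) := rfl

lemma md_Splx {p q : X} (hp : p ∈ Splx) (hq : q ∈ Splx) : md p q ∈ Splx := by
  refine ⟨fun i => ?_, ?_⟩
  · have a := hp.1 i; have b := hq.1 i
    rw [md_apply]; positivity
  · have a := hp.2; have b := hq.2
    simp only [md_apply]; linarith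

lemma md_hs {a b : Fin 3} {p q : X} (hp : p ∈ hs a b) (hq : q ∈ hs a b) : md p q ∈ hs a b := by
  refine ⟨md_Splx hp.1 hq.1, ?_, ?_⟩
  · have a := hp.2.1; have b := hq.2.1
    simp only [md_apply]; linarith
  · have a := hp.2.2; have b := hq.2.2
    simp only [md_apply]; linarith

lemma md_sA {p q : X} (hp : p ∈ sA) (hq : q ∈ sA) : md p q ∈ sA := by
  refine ⟨md_Splx hp.1 hq.1, ?_⟩
  have a := hp.2; have b := hq.2
  simp only [md_apply]; linarith

lemma vert_hs {a b : Fin 3} (h : a ≠ b) : unitTri a ∈ hs a b := by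
  refine ⟨single_mem a, ?_, ?_⟩ <;> simp [unitTri, h.symm]

lemma mid_hs {a b : Fin 3} (h : a ≠ b) : md (unitTri a) (unitTri b) ∈ hs a b := by
  refine ⟨md_Splx (single_mem a) (single_mem b), ?_, ?_⟩
  · simp [unitTri, h.symm, h, md_apply]; norm_num
  · simp [unitTri, h.symm, h, md_apply]

/-- Discrete Green formula: for any admissible `F` and `U`, the pairing of their differences over all
cells depends only on the boundary values. It is `loop_sum` for the edge functional
`(F q - F p) * U (md p q)`, which vanishes on `sA`, where `U = 0`, and on the two half sides where
`F` is constant, and telescopes on `sB`, where `U = 1`. -/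
lemma green (n : ℕ) {α β : ℝ} {F U : X → ℝ} (hF : TestT α β F) (hU : TestH U) :
    ∑ w : W (n + 1), ∑ i : Fin 3, ((sgn (n+1) w : ℤ) : ℝ) *
      ((F (cl (n+1) w (i + 2)) - F (cl (n+1) w (i + 1))) *
        (U (emid (cl (n+1) w) i) - U (ctr (cl (n+1) w)))) = β - α := by
  set J : X → X → ℝ := fun p q => (F q - F p) * U (md p q) with hJ
  have anti : ∀ p q, J q p = - J p q := fun p q => by simp only [hJ, md_comm q p]; ring
  have h1 := loop_sum unitTri (n+1) J anti
  have e1 : refn^[n+1] J (unitTri 0) (unitTri 1) = 0 - 0 := by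
    refine refn_iter (C := sA) (fun p hp q hq => md_sA hp hq) (fun _ => 0) (n+1) J ?_ _ ?_ _ ?_
    · intro p hp q hq
      simp only [hJ, hU.1 _ (md_sA hp hq)]; ring
    · exact ⟨single_mem 0, by simp [unitTri]⟩
    · exact ⟨single_mem 1, by simp [unitTri]⟩
  have zer : ∀ {a b : Fin 3} {r : ℝ} (_ : ∀ x ∈ hs a b, F x = r),
      ∀ p ∈ hs a b, ∀ q ∈ hs a b, refn^[n] J p q = 0 := by
    intro a b r h p hp q hq
    have := refn_iter (C := hs a b) (fun p hp q hq => md_hs hp hq) (fun _ => 0) n J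
      (fun p hp q hq => by simp only [hJ]; rw [h p hp, h q hq]; ring) p hp q hq
    simpa using this
  have one : ∀ {a b : Fin 3} (_ : ∀ x ∈ hs a b, U x = 1),
      ∀ p ∈ hs a b, ∀ q ∈ hs a b, refn^[n] J p q = F q - F p := by
    intro a b h p hp q hq
    exact refn_iter (C := hs a b) (fun p hp q hq => md_hs hp hq) F n J
      (fun p hp q hq => by simp only [hJ]; rw [h _ (md_hs hp hq)]; ring) p hp q hq
  have i1 : (1 : Fin 3) ≠ 2 := by decide
  have i2 : (0 : Fin 3) ≠ 2 := by decide
  have e2 : refn^[n+1] J (unitTri 1) (unitTri 2) = F (unitTri 2) - α := by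
    rw [Function.iterate_succ_apply', refn]
    rw [zer hF.1 _ (vert_hs i1) _ (mid_hs i1),
      one (fun x hx => hU.2 x (Or.inl hx)) _ (by rw [md_comm]; exact mid_hs i1.symm) _
        (vert_hs i1.symm), hF.1 _ (mid_hs i1)]
    ring
  have e3 : refn^[n+1] J (unitTri 2) (unitTri 0) = β - F (unitTri 2) := by
    rw [Function.iterate_succ_apply', refn]
    rw [zer hF.2 _ (by rw [md_comm]; exact mid_hs i2) _ (vert_hs i2),
      one (fun x hx => hU.2 x (Or.inr hx)) _ (vert_hs i2.symm) _ (mid_hs i2.symm),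
      md_comm, hF.2 _ (mid_hs i2)]
    ring
  have h2 : loop (refn^[n+1] J) unitTri = β - α := by
    rw [loop, e1, e2, e3]; ring
  rw [← h2, ← h1]
  refine Finset.sum_congr rfl fun w _ => ?_
  rw [Fin.sum_univ_three]
  have f1 : (1:Fin 3) + 2 = 0 := rfl
  have f2 : (2:Fin 3) + 1 = 0 := rfl
  have f3 : (2:Fin 3) + 2 = 1 := rfl
  have f4 : (1:Fin 3) + 1 = 2 := rfl
  simp only [loop, hJ, emid, zero_add, f1, f2, f3, f4]
  ring

lemma sgn_sq (n : ℕ) (w : W n) : ((sgn n w : ℤ) : ℝ) ^ 2 = 1 := by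
  rcases Int.units_eq_one_or (sgn n w) with h | h <;> rw [h] <;> norm_num

lemma ET_nonneg (n : ℕ) (g : X → ℝ) : 0 ≤ ET n g :=
  Finset.sum_nonneg fun _ _ => Finset.sum_nonneg fun _ _ => sq_nonneg _

lemma EH_nonneg (n : ℕ) (g : X → ℝ) : 0 ≤ EH n g :=
  Finset.sum_nonneg fun _ _ => Finset.sum_nonneg fun _ _ => sq_nonneg _

/-- One half of the duality, by Cauchy–Schwarz in the Green formula. -/
lemma ET_mul_EH (n : ℕ) {α β : ℝ} {F U : X → ℝ} (hF : TestT α β F) (hU : TestH U) :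
    (β - α) ^ 2 ≤ ET (n+1) F * EH (n+1) U := by
  have h := green n hF hU
  rw [← Fintype.sum_prod_type' (f := fun (w : W (n+1)) (i : Fin 3) => ((sgn (n+1) w : ℤ) : ℝ) *
      ((F (cl (n+1) w (i + 2)) - F (cl (n+1) w (i + 1))) *
        (U (emid (cl (n+1) w) i) - U (ctr (cl (n+1) w)))))] at h
  have e1 : ET (n+1) F = ∑ x : W (n+1) × Fin 3, (((sgn (n+1) x.1 : ℤ) : ℝ) *
      (F (cl (n+1) x.1 (x.2 + 2)) - F (cl (n+1) x.1 (x.2 + 1)))) ^ 2 := by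
    rw [Fintype.sum_prod_type]
    simp only [mul_pow, sgn_sq, one_mul]; rfl
  have e2 : EH (n+1) U = ∑ x : W (n+1) × Fin 3,
      (U (emid (cl (n+1) x.1) x.2) - U (ctr (cl (n+1) x.1))) ^ 2 := by
    rw [Fintype.sum_prod_type]; rfl
  rw [e1, e2, ← h]
  simp only [← mul_assoc]
  exact Finset.sum_mul_sq_le_sq_mul_sq _ _ _

end Green

/-! ### The discrete Poincaré lemma and boundary values -/

/-- The cyclic permutation with values `i + 1`, `i + 2`, `i`; it labels a child adjacent to the edge
opposite to `i`. -/
def pe (i : Fin 3) : P3 := Equiv.addRight (i + 1)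

/-- On labels, right multiplication by this transposition passes to the other child adjacent to the
same edge. -/
abbrev s01 : P3 := Equiv.swap 0 1

lemma pe_val (i : Fin 3) : pe i 0 = i + 1 ∧ pe i 1 = i + 2 ∧ pe i 2 = i := by
  revert i; decide

lemma pes_val (σ : P3) : (σ * s01) 0 = σ 1 ∧ (σ * s01) 1 = σ 0 ∧ (σ * s01) 2 = σ 2 := by
  revert σ; decide

lemma perm_pe (σ : P3) : σ = pe (σ 2) ∨ σ = pe (σ 2) * s01 := by
  revert σ; decide

/-- `ω w i` is to be the increment along the edge of `cl n w` opposite to `i`. It is consistent if it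
only depends on that edge and not on the cell. -/
def Consistent (n : ℕ) (ω : W n → Fin 3 → ℝ) : Prop :=
  ∀ w w' i, cl n w (i + 1) = cl n w' (i + 1) → cl n w (i + 2) = cl n w' (i + 2) → ω w i = ω w' i

/-- Discrete Poincaré lemma: a consistent closed `1`-form is exact. By induction on the level, a
primitive of the form summed over the two halves of each coarse edge is extended to midpoints and
centres. -/
lemma poincare : ∀ (n : ℕ) (ω : W n → Fin 3 → ℝ), (∀ w, ω w 0 + ω w 1 + ω w 2 = 0) →
    Consistent n ω → ∃ F : X → ℝ, ∀ w i, F (cl n w (i + 2)) - F (cl n w (i + 1)) = ω w i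
  | 0, ω, hs, _ => by
      refine ⟨fun x => x 1 * ω () 2 - x 2 * ω () 1, fun w i => ?_⟩
      have h := hs ()
      obtain rfl : w = () := rfl
      have f1 : (1:Fin 3) + 2 = 0 := rfl
      have f2 : (2:Fin 3) + 1 = 0 := rfl
      have f3 : (2:Fin 3) + 2 = 1 := rfl
      have f4 : (1:Fin 3) + 1 = 2 := rfl
      show unitTri (i + 2) 1 * ω () 2 - unitTri (i + 2) 2 * ω () 1 -
        (unitTri (i + 1) 1 * ω () 2 - unitTri (i + 1) 2 * ω () 1) = ω () i
      fin_cases i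
      · simp [unitTri]; linarith
      · simp [unitTri, f1, f4]
      · simp [unitTri, f2, f3]
  | n + 1, ω, hs, hc => by
      have hA : ∀ w σ, ω (w, σ * s01) 0 = ω (w, σ) 0 := by
        intro w σ
        obtain ⟨e0, e1, e2⟩ := pes_val σ
        refine hc _ _ _ ?_ ?_
        · show sub (σ * s01) (cl n w) 1 = sub σ (cl n w) 1
          rw [sub_one', sub_one', e0, e1, add_comm]
        · show sub (σ * s01) (cl n w) 2 = sub σ (cl n w) 2
          rw [sub_two', sub_two', sum_perm_vert, sum_perm_vert]
      have hB : ∀ w σ σ', σ 0 = σ' 0 → ω (w, σ) 1 = ω (w, σ') 1 := by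
        intro w σ σ' h
        refine hc _ _ _ ?_ ?_
        · show sub σ (cl n w) 2 = sub σ' (cl n w) 2
          rw [sub_two', sub_two', sum_perm_vert, sum_perm_vert]
        · show sub σ (cl n w) 0 = sub σ' (cl n w) 0
          rw [sub_zero', sub_zero', h]
      have hC : ∀ w w' σ, cl n w (σ 0) = cl n w' (σ 0) → cl n w (σ 1) = cl n w' (σ 1) →
          ω (w, σ) 2 = ω (w', σ) 2 := by
        intro w w' σ h0 h1
        refine hc _ _ _ h0 ?_
        show sub σ (cl n w) 1 = sub σ (cl n w') 1
        rw [sub_one', sub_one', h0, h1]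
      -- increments along the edges of the coarse cells; `B w k` is the increment from the centre of
      -- the cell `w` to its vertex `k`
      set ω' : W n → Fin 3 → ℝ := fun w i => ω (w, pe i) 2 - ω (w, pe i * s01) 2 with hω'
      set B : W n → Fin 3 → ℝ := fun w i => ω (w, pe (i + 2)) 1 with hBdef
      have hBσ : ∀ w σ, ω (w, σ) 1 = B w (σ 0) := by
        intro w σ
        refine hB w σ _ ?_
        rw [(pe_val _).1]; revert σ; decide
      have hω'B : ∀ w i, ω' w i = B w (i + 2) - B w (i + 1) := by
        intro w i
        have h1 := hs (w, pe i); have h2 := hs (w, pe i * s01)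
        have h3 := hA w (pe i)
        have h4 := hBσ w (pe i); have h5 := hBσ w (pe i * s01)
        rw [(pes_val _).1, (pe_val i).2.1] at h5
        rw [(pe_val i).1] at h4
        simp only [hω']
        linarith
      have hs' : ∀ w, ω' w 0 + ω' w 1 + ω' w 2 = 0 := by
        intro w
        rw [hω'B, hω'B, hω'B]
        have f1 : (1:Fin 3) + 2 = 0 := rfl
        have f2 : (2:Fin 3) + 1 = 0 := rfl
        have f3 : (2:Fin 3) + 2 = 1 := rfl
        have f4 : (1:Fin 3) + 1 = 2 := rfl
        rw [f1, f2, f3, f4, zero_add, zero_add]; ring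
      have hc' : Consistent n ω' := by
        intro w w' i h1 h2
        obtain ⟨p0, p1, p2⟩ := pe_val i
        obtain ⟨q0, q1, q2⟩ := pes_val (pe i)
        simp only [hω']
        rw [hC w w' (pe i) (by rw [p0]; exact h1) (by rw [p1]; exact h2),
          hC w w' (pe i * s01) (by rw [q0, p1]; exact h2) (by rw [q1, p0]; exact h1)]
      obtain ⟨F', hF'⟩ := poincare n ω' hs' hc'
      have hcen : ∀ w i j, F' (cl n w i) - B w i = F' (cl n w j) - B w j := by
        intro w
        have g := hF' w
        simp only [hω'B] at g
        have g0 := g 0; have g1 := g 1; have g2 := g 2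
        have f1 : (1:Fin 3) + 2 = 0 := rfl
        have f2 : (2:Fin 3) + 1 = 0 := rfl
        have f3 : (2:Fin 3) + 2 = 1 := rfl
        have f4 : (1:Fin 3) + 1 = 2 := rfl
        rw [zero_add, zero_add] at g0; rw [f1, f4] at g1; rw [f2, f3] at g2
        have : ∀ i, F' (cl n w i) - B w i = F' (cl n w 0) - B w 0 := by
          intro i; fin_cases i
          · rfl
          · show F' (cl n w 1) - B w 1 = _; linarith
          · show F' (cl n w 2) - B w 2 = _; linarith
        intro i j; rw [this i, this j]
      set φ : W n × P3 × Fin 3 → ℝ := fun x =>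
        ![F' (cl n x.1 (x.2.1 0)), F' (cl n x.1 (x.2.1 0)) + ω (x.1, x.2.1) 2,
          F' (cl n x.1 (x.2.1 0)) - ω (x.1, x.2.1) 1] x.2.2 with hφ
      set vt : W n × P3 × Fin 3 → X := fun x => sub x.2.1 (cl n x.1) x.2.2 with hvt
      have hfac : Function.FactorsThrough φ vt := by
        rintro ⟨w, σ, j⟩ ⟨w', σ', j'⟩ h
        have h0 : sub σ (cl n w) j = sub σ' (cl n w') j' := h
        obtain rfl : j = j' := vtx_inj (n := n + 1) (w := (w, σ)) (w' := (w', σ')) h0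
        fin_cases j
        · show F' (cl n w (σ 0)) = F' (cl n w' (σ' 0))
          exact congrArg F' h0
        · show F' (cl n w (σ 0)) + ω (w, σ) 2 = F' (cl n w' (σ' 0)) + ω (w', σ') 2
          obtain ⟨e2, ek⟩ := sub_one_eq h0
          have a0 := ek (σ 0) (by simp)
          have a1 := ek (σ 1) (by simp)
          have : σ' = σ ∨ σ' = σ * s01 := by
            have hh : ∀ σ σ' : P3, σ 2 = σ' 2 → (σ' = σ ∨ σ' = σ * s01) := by decide
            exact hh _ _ e2
          rcases this with rfl | rfl
          · rw [hC w w' _ a0 a1, a0]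
          · obtain ⟨q0, q1, q2⟩ := pes_val σ
            rw [← hC w w' (σ * s01) (by rw [q0]; exact a1) (by rw [q1]; exact a0), q0, ← a1]
            rcases perm_pe σ with hp | hp
            · have g := hF' w (σ 2)
              obtain ⟨p0, p1, p2⟩ := pe_val (σ 2)
              rw [← p0, ← p1] at g
              simp only [hω'] at g
              rw [← hp] at g
              linarith
            · have g := hF' w (σ 2)
              obtain ⟨p0, p1, p2⟩ := pe_val (σ 2)
              obtain ⟨r0, r1, r2⟩ := pes_val (pe (σ 2))
              rw [← p0, ← p1] at g
              simp only [hω'] at g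
              rw [← r0, ← r1, ← hp] at g
              have : pe (σ 2) = σ * s01 := by
                have hh : ∀ a b : P3, a = b * s01 → b = a * s01 := by decide
                exact hh _ _ hp
              rw [this] at g
              linarith
        · show F' (cl n w (σ 0)) - ω (w, σ) 1 = F' (cl n w' (σ' 0)) - ω (w', σ') 1
          obtain rfl := ctr_eq_of_sub h0
          rw [hBσ, hBσ]; exact hcen _ _ _
      refine ⟨Function.extend vt φ 0, ?_⟩
      rintro ⟨w, σ⟩ i
      have ev : ∀ j, Function.extend vt φ 0 (cl (n+1) (w, σ) j) = φ (w, σ, j) := fun j =>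
        hfac.extend_apply 0 (w, σ, j)
      rw [ev, ev]
      have h := hs (w, σ)
      fin_cases i
      · show F' (cl n w (σ 0)) - ω (w, σ) 1 - (F' (cl n w (σ 0)) + ω (w, σ) 2) = ω (w, σ) 0
        linarith
      · show F' (cl n w (σ 0)) - (F' (cl n w (σ 0)) - ω (w, σ) 1) = ω (w, σ) 1
        linarith
      · show F' (cl n w (σ 0)) + ω (w, σ) 2 - F' (cl n w (σ 0)) = ω (w, σ) 2
        linarith

lemma pair_le {x : X} (hx : x ∈ Splx) {a b : Fin 3} (hab : a ≠ b) : x a + x b ≤ 1 := by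
  have h0 := hx.1 0; have h1 := hx.1 1; have h2 := hx.1 2; have h3 := hx.2
  fin_cases a <;> fin_cases b <;> simp_all <;> linarith

lemma hs_of_md {a b : Fin 3} (hab : a ≠ b) {x y : X} (hx : x ∈ Splx) (hy : y ∈ Splx)
    (h : md x y ∈ hs a b) : x ∈ hs a b ∨ y ∈ hs a b := by
  have l1 := pair_le hx hab
  have l2 := pair_le hy hab
  obtain ⟨_, h1, h2⟩ := h
  simp only [md_apply] at h1 h2
  by_cases h : x b ≤ x a
  · exact Or.inl ⟨hx, by linarith, h⟩
  · exact Or.inr ⟨hy, by linarith, by linarith⟩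

lemma not_hs_of_pos {a b : Fin 3} (hab : a ≠ b) {x : X} (hx : ∀ k, 0 < x k) : x ∉ hs a b := by
  rintro ⟨h, h4, -⟩
  have h0 := hx 0; have h1 := hx 1; have h2 := hx 2; have h3 := h.2
  clear hx h
  fin_cases a <;> fin_cases b <;> simp at * <;> linarith

/-- A function on the vertices that is constant along the edges contained in a half side is
constant on the half side. -/
lemma const_side {a b : Fin 3} (hab : a ≠ b) (F : X → ℝ) : ∀ (n : ℕ),
    (∀ w i j, cl n w i ∈ hs a b → cl n w j ∈ hs a b → F (cl n w i) = F (cl n w j)) →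
    ∀ w i, cl n w i ∈ hs a b → F (cl n w i) = F (unitTri a)
  | 0, _, w, i, h => by
      have : i = a := by
        by_contra hi
        obtain ⟨_, h1, h2⟩ := h
        change unitTri i a + unitTri i b = 1 at h1
        change unitTri i b ≤ unitTri i a at h2
        have ha : unitTri i a = 0 := by simp [unitTri, Ne.symm hi]
        linarith
      rw [this]; rfl
  | n + 1, H, (w, σ), i, h => by
      have e0 : ∀ σ, cl (n+1) (w, σ) 0 = cl n w (σ 0) := fun _ => rfl
      have e1 : ∀ w σ, cl (n+1) (w, σ) 1 = md (cl n w (σ 0)) (cl n w (σ 1)) := fun _ _ => rfl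
      have H' : ∀ w i j, cl n w i ∈ hs a b → cl n w j ∈ hs a b → F (cl n w i) = F (cl n w j) := by
        intro w i j hi hj
        by_cases hij : i = j
        · rw [hij]
        have ex : ∀ i j : Fin 3, i ≠ j → ∃ σ : P3, σ 0 = i ∧ σ 1 = j := by decide
        have step : ∀ i j, i ≠ j → cl n w i ∈ hs a b → cl n w j ∈ hs a b →
            F (cl n w i) = F (md (cl n w i) (cl n w j)) := by
          intro i j hij hi hj
          obtain ⟨σ, h0, h1⟩ := ex i j hij
          have := H (w, σ) 0 1
          change cl n w (σ 0) ∈ _ → _ → F (cl n w (σ 0)) = _ at this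
          rw [e1, h0, h1] at this
          exact this hi (md_hs hi hj)
        rw [step i j hij hi hj, step j i (Ne.symm hij) hj hi, md_comm]
      have IH := const_side hab F n H'
      fin_cases i
      · exact IH w (σ 0) h
      · change md (cl n w (σ 0)) (cl n w (σ 1)) ∈ hs a b at h
        show F (md (cl n w (σ 0)) (cl n w (σ 1))) = _
        rcases hs_of_md hab (cl_mem n w _) (cl_mem n w _) h with h1 | h1
        · rw [← IH w _ h1]
          exact (H (w, σ) 1 0 h h1)
        · rw [← IH w _ h1, md_comm]
          have := H (w, σ * s01) 1 0
          rw [e1, e0, (pes_val σ).1, (pes_val σ).2.1, md_comm] at this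
          rw [md_comm]
          exact this h h1
      · exact absurd h (not_hs_of_pos hab (vtx2_pos n (w, σ)))

lemma hs_sub {a b : Fin 3} {x y : X} (hab : a ≠ b) (hx : x ∈ Splx) (hy : y ∈ Splx)
    (hch : (x a ≤ x b ∧ y a ≤ y b) ∨ (x b ≤ x a ∧ y b ≤ y a)) (h : md x y ∈ hs a b) :
    x ∈ hs a b ∧ y ∈ hs a b := by
  have l1 := pair_le hx hab
  have l2 := pair_le hy hab
  obtain ⟨_, h1, h2⟩ := h
  simp only [md_apply] at h1 h2
  rcases hch with ⟨p, q⟩ | ⟨p, q⟩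
  · exact ⟨⟨hx, by linarith, by linarith⟩, ⟨hy, by linarith, by linarith⟩⟩
  · exact ⟨⟨hx, by linarith, by linarith⟩, ⟨hy, by linarith, by linarith⟩⟩

/-- An edge has its midpoint in a half side if and only if both its ends lie there. -/
lemma emid_hs_iff {n : ℕ} {w : W (n+1)} {a b i : Fin 3} (hab : a ≠ b) :
    emid (cl (n+1) w) i ∈ hs a b ↔
      cl (n+1) w (i + 1) ∈ hs a b ∧ cl (n+1) w (i + 2) ∈ hs a b := by
  constructor
  · intro h
    refine hs_sub hab (cl_mem _ _ _) (cl_mem _ _ _) ?_ h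
    rcases chamber n w a b with h | h
    · exact Or.inl ⟨h _, h _⟩
    · exact Or.inr ⟨h _, h _⟩
  · rintro ⟨h1, h2⟩
    exact md_hs h1 h2

/-- A midpoint of an edge lying in a free half side is outside `sA ∪ sB`. -/
lemma emid_free {n : ℕ} {w : W (n+1)} {i a : Fin 3} (ha : a ≠ 2)
    (h : emid (cl (n+1) w) i ∈ hs a 2) : emid (cl (n+1) w) i ∉ sA ∪ sB := by
  have hab := (emid_hs_iff ha).1 h
  obtain ⟨h1, h2⟩ := hab
  have hne : cl (n+1) w (i + 1) ≠ cl (n+1) w (i + 2) := fun e => by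
    have := vtx_inj e
    have hh : ∀ i : Fin 3, i + 1 ≠ i + 2 := by decide
    exact hh i this
  have key : ¬ (cl (n+1) w (i + 1) 2 = cl (n+1) w (i + 2) 2) := by
    intro e
    apply hne
    funext k
    have s1 := h1.1.2; have s2 := h2.1.2
    have m1 := h1.2.1; have m2 := h2.2.1
    fin_cases a
    · simp at m1 m2
      fin_cases k <;> simp <;> linarith
    · simp at m1 m2
      fin_cases k <;> simp <;> linarith
    · exact absurd rfl ha
  have c := h.2.2
  have c1 := h1.2.2; have c2 := h2.2.2
  have n1 := h1.1.1 2; have n2 := h2.1.1 2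
  have n3 := h1.1.1 a; have n4 := h2.1.1 a
  have t1 := h1.2.1; have t2 := h2.2.1
  rintro (hA | hB)
  · have e := hA.2
    rw [emid, md_apply] at e
    exact key (by linarith)
  · have m1 := h1.1.2; have m2 := h2.1.2
    have p0 := h1.1.1 0; have p1 := h1.1.1 1; have q0 := h2.1.1 0; have q1 := h2.1.1 1
    apply key
    rcases hB with hB | hB <;> obtain ⟨_, b1, b2⟩ := hB <;>
      simp only [emid, md_apply] at b1 b2 <;> fin_cases a <;>
      first
      | exact absurd rfl ha
      | (simp at *; linarith)

/-! ### Conjugate potentials -/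

open Classical in
/-- The simplest admissible potential on the hexacarpet, the indicator function of `sB`. -/
def indB : X → ℝ := fun x => if x ∈ sB then 1 else 0

lemma sA_sB {x : X} (hA : x ∈ sA) (hB : x ∈ sB) : False := by
  have h0 := hA.2
  rcases hB with h | h <;> obtain ⟨_, h1, h2⟩ := h <;> linarith

lemma testH_indB : TestH indB :=
  ⟨fun _ hx => if_neg fun h => sA_sB hx h, fun _ hx => if_pos hx⟩

lemma h12_h02 {x : X} (hA : x ∈ hs 1 2) (hB : x ∈ hs 0 2) : False := by
  obtain ⟨h, h1, h2⟩ := hA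
  obtain ⟨_, h3, h4⟩ := hB
  have := h.2
  have := h.1 2
  linarith

open Classical in
/-- Modification of a function so as to satisfy the boundary conditions `TestT`. -/
def clampT (α β : ℝ) (g : X → ℝ) : X → ℝ :=
  fun x => if x ∈ hs 1 2 then α else if x ∈ hs 0 2 then β else g x

lemma testT_clampT (α β : ℝ) (g : X → ℝ) : TestT α β (clampT α β g) :=
  ⟨fun _ hx => if_pos hx, fun _ hx => by
    rw [clampT, if_neg fun h => h12_h02 h hx, if_pos hx]⟩

/-- There is a harmonic potential `U` with the boundary conditions `TestH`: its differences are the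
component of those of `indB` orthogonal to the differences of functions vanishing on `sA ∪ sB`. -/
lemma dual_field (n : ℕ) : ∃ U : X → ℝ, TestH U ∧ ∀ U0 : X → ℝ, (∀ x ∈ sA ∪ sB, U0 x = 0) →
    ∑ w : W n, ∑ i : Fin 3, (U (emid (cl n w) i) - U (ctr (cl n w))) *
      (U0 (emid (cl n w) i) - U0 (ctr (cl n w))) = 0 := by
  let d : (X → ℝ) →ₗ[ℝ] EuclideanSpace ℝ (W n × Fin 3) :=
    { toFun := fun U => WithLp.toLp 2 fun x => U (emid (cl n x.1) x.2) - U (ctr (cl n x.1))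
      map_add' := fun U V => by ext x; simp; ring
      map_smul' := fun r U => by ext x; simp; ring }
  let P : Submodule ℝ (X → ℝ) :=
    { carrier := {U | ∀ x ∈ sA ∪ sB, U x = 0}
      add_mem' := fun {a b} ha hb x hx => by simp [ha x hx, hb x hx]
      zero_mem' := fun x hx => rfl
      smul_mem' := fun r a ha x hx => by simp [ha x hx] }
  obtain ⟨y, hy, z, hz, hyz⟩ := (P.map d).exists_add_mem_mem_orthogonal (d indB)
  obtain ⟨U2, hU2, rfl⟩ := hy
  refine ⟨indB - U2, ⟨fun x hx => ?_, fun x hx => ?_⟩, fun U0 hU0 => ?_⟩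
  · simp [testH_indB.1 x hx, hU2 x (Or.inl hx)]
  · simp [testH_indB.2 x hx, hU2 x (Or.inr hx)]
  · have hz' : z = d (indB - U2) := by rw [map_sub, hyz]; simp
    have := (Submodule.mem_orthogonal _ _).1 hz (d U0) ⟨U0, hU0, rfl⟩
    rw [hz', PiLp.inner_apply, Fintype.sum_prod_type] at this
    simpa [d] using this

open Classical in
/-- The other half of the duality. For the harmonic potential `U`, the differences multiplied by the
orientation of the cell form a consistent closed `1`-form. Its primitive is constant on the half
sides `hs 1 2` and `hs 0 2`, which carry no boundary condition for `U`; normalized, it is the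
conjugate function `G`. -/
lemma dual (n : ℕ) : ∃ G U : X → ℝ, TestT 0 1 G ∧ TestH U ∧ ET (n+1) G * EH (n+1) U = 1 := by
  obtain ⟨U, hU, hort⟩ := dual_field (n+1)
  set v : W (n+1) → Fin 3 → ℝ := fun w i => U (emid (cl (n+1) w) i) - U (ctr (cl (n+1) w)) with hv
  -- testing against the indicator function of a centre: the flow has no divergence there
  have hdiv : ∀ w, v w 0 + v w 1 + v w 2 = 0 := by
    intro w
    have h := hort (fun x => if x = ctr (cl (n+1) w) then 1 else 0) (fun x hx => by
      refine if_neg ?_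
      rintro rfl
      have hp := ctr_pos (n+1) w
      rcases hx with hx | hx | hx
      · exact absurd hx.2 (hp 2).ne'
      · exact not_hs_of_pos (by decide) hp hx
      · exact not_hs_of_pos (by decide) hp hx)
    have h1 : ∀ w' i, (U (emid (cl (n+1) w') i) - U (ctr (cl (n+1) w'))) *
      ((if emid (cl (n+1) w') i = ctr (cl (n+1) w) then (1:ℝ) else 0) -
        (if ctr (cl (n+1) w') = ctr (cl (n+1) w) then (1:ℝ) else 0)) =
        if w' = w then - v w i else 0 := by
      intro w' i
      rw [if_neg emid_ne_ctr]
      by_cases e : w' = w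
      · subst e; simp [hv]
      · rw [if_neg fun h => e (ctr_inj h), if_neg e]; ring
    simp only [h1] at h
    rw [Finset.sum_comm] at h
    simp only [Finset.sum_ite_eq', Finset.mem_univ, if_true, Fin.sum_univ_three] at h
    linarith
  -- testing against the indicator function of a midpoint: the flows from the adjacent cells cancel
  have hmid : ∀ w i, emid (cl (n+1) w) i ∉ sA ∪ sB →
      ∑ w', (if ∀ k, k ≠ i → cl (n+1) w k = cl (n+1) w' k then v w' i else 0) = 0 := by
    intro w i hni
    have h := hort (fun x => if x = emid (cl (n+1) w) i then 1 else 0) (fun x hx => by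
      refine if_neg ?_
      rintro rfl
      exact hni hx)
    refine Eq.trans (Finset.sum_congr rfl fun w' _ => Eq.symm ?_) h
    rw [Finset.sum_eq_single i]
    · rw [if_neg (c := ctr (cl (n+1) w') = _) (fun h => emid_ne_ctr h.symm)]
      by_cases e : ∀ k, k ≠ i → cl (n+1) w k = cl (n+1) w' k
      · have hh : ∀ i : Fin 3, i + 1 ≠ i ∧ i + 2 ≠ i := by decide
        rw [if_pos e, if_pos (by rw [emid, emid, e _ (hh i).1, e _ (hh i).2])]
        simp [hv]
      · rw [if_neg e, if_neg fun h => e (emid_inj h.symm).2]; ring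
    · intro j _ hj
      rw [if_neg (fun h => hj (emid_inj h).1), if_neg (fun h => emid_ne_ctr h.symm)]; ring
    · simp
  have hk : ∀ i k : Fin 3, k ≠ i → k = i + 1 ∨ k = i + 2 := by decide
  have hfree : ∀ w i a, a ≠ 2 → emid (cl (n+1) w) i ∈ hs a 2 → v w i = 0 := by
    intro w i a ha h
    have h1 := hmid w i (emid_free ha h)
    rw [Finset.sum_eq_single w] at h1
    · simpa using h1
    · intro w' _ hw'
      refine if_neg fun hsh => ?_
      have hh : ∀ i : Fin 3, i + 1 ≠ i ∧ i + 2 ≠ i := by decide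
      have := (shared_edge (n+1) w w' i hw'.symm (hsh _ (hh i).1) (hsh _ (hh i).2)).2
      refine not_hs_of_pos ha (x := emid (cl (n+1) w) i) (fun k => ?_) h
      have := this k
      rw [emid, md_apply]; linarith
    · simp
  set ω : W (n+1) → Fin 3 → ℝ := fun w i => ((sgn (n+1) w : ℤ) : ℝ) * v w i with hω
  have hωs : ∀ w, ω w 0 + ω w 1 + ω w 2 = 0 := by
    intro w
    simp only [hω]
    rw [← mul_add, ← mul_add, hdiv, mul_zero]
  have hωc : Consistent (n+1) ω := by
    intro w w' i h1 h2
    by_cases hne : w = w'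
    · rw [hne]
    obtain ⟨hsg, hpos⟩ := shared_edge (n+1) w w' i hne h1 h2
    have hp : ∀ k, 0 < emid (cl (n+1) w) i k := fun k => by
      have := hpos k
      rw [emid, md_apply]; linarith
    have h := hmid w i (by
      rintro (hx | hx | hx)
      · exact absurd hx.2 (hp 2).ne'
      · exact not_hs_of_pos (by decide) hp hx
      · exact not_hs_of_pos (by decide) hp hx)
    have hsh : ∀ w'', w'' ≠ w → w'' ≠ w' → ¬ (∀ k, k ≠ i → cl (n+1) w k = cl (n+1) w'' k) := by
      intro w'' e1 e2 hsh
      have hh : ∀ i : Fin 3, i + 1 ≠ i ∧ i + 2 ≠ i := by decide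
      have g1 := hsh _ (hh i).1
      have g2 := hsh _ (hh i).2
      have s1 := (shared_edge (n+1) w w'' i e1.symm g1 g2).1
      have s2 := (shared_edge (n+1) w' w'' i e2.symm (h1.symm.trans g1) (h2.symm.trans g2)).1
      rw [hsg, neg_neg, s1] at s2
      rcases Int.units_eq_one_or (sgn (n+1) w) with h | h <;> rw [h] at s2 <;>
        exact absurd s2 (by decide)
    rw [← Finset.sum_subset (Finset.subset_univ {w, w'}), Finset.sum_pair hne] at h
    · rw [if_pos (fun _ _ => rfl), if_pos] at h
      · simp only [hω, hsg]
        push_cast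
        linear_combination ((sgn (n+1) w : ℤ) : ℝ) * h
      · intro k hki
        rcases hk i k hki with rfl | rfl
        · exact h1
        · exact h2
    · intro w'' _ hw''
      simp only [Finset.mem_insert, Finset.mem_singleton, not_or] at hw''
      exact if_neg (hsh w'' hw''.1 hw''.2)
  obtain ⟨F, hF⟩ := poincare (n+1) ω hωs hωc
  have hside : ∀ a : Fin 3, a ≠ 2 → ∀ w i, cl (n+1) w i ∈ hs a 2 →
      F (cl (n+1) w i) = F (unitTri a) := by
    intro a ha
    refine const_side ha F (n+1) fun w i j hi hj => ?_
    have step : ∀ i, cl (n+1) w (i+1) ∈ hs a 2 → cl (n+1) w (i+2) ∈ hs a 2 →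
        F (cl (n+1) w (i+2)) = F (cl (n+1) w (i+1)) := by
      intro i h1 h2
      have := hF w i
      rw [hω] at this
      simp only at this
      rw [hfree w i a ha ((emid_hs_iff ha).2 ⟨h1, h2⟩), mul_zero] at this
      linarith
    have hh : ∀ i j : Fin 3, i = j ∨ (∃ k, i = k + 1 ∧ j = k + 2) ∨ (∃ k, i = k + 2 ∧ j = k + 1) := by
      decide
    rcases hh i j with rfl | ⟨k, rfl, rfl⟩ | ⟨k, rfl, rfl⟩
    · rfl
    · exact (step k hi hj).symm
    · exact step k hj hi
  set α := F (unitTri 1)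
  set β := F (unitTri 0)
  set G := clampT α β F with hG
  have hGt : TestT α β G := testT_clampT α β F
  have hGF : ∀ w i, G (cl (n+1) w i) = F (cl (n+1) w i) := by
    intro w i
    rw [hG, clampT]
    split_ifs with h1 h2
    · exact (hside 1 (by decide) w i h1).symm
    · exact (hside 0 (by decide) w i h2).symm
    · rfl
  have hET : ET (n+1) G = EH (n+1) U := by
    refine Finset.sum_congr rfl fun w _ => Finset.sum_congr rfl fun i _ => ?_
    rw [hGF, hGF, hF]
    simp only [hω, mul_pow, sgn_sq, one_mul, hv]
  have hgr := green n hGt hU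
  have hN : EH (n+1) U = β - α := by
    rw [← hgr]
    refine Finset.sum_congr rfl fun w _ => Finset.sum_congr rfl fun i _ => ?_
    rw [hGF, hGF, hF]
    simp only [hω, hv]
    have := sgn_sq (n+1) w
    linear_combination -(U (emid (cl (n+1) w) i) - U (ctr (cl (n+1) w))) ^ 2 * this
  have hpos : EH (n+1) U ≠ 0 := by
    intro h0
    have := ET_mul_EH n (testT_clampT 0 1 0) hU
    rw [h0] at this
    norm_num at this
  refine ⟨fun x => (G x - α) / EH (n+1) U, U, ⟨fun x hx => ?_, fun x hx => ?_⟩, hU, ?_⟩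
  · simp only [hGt.1 x hx, sub_self, zero_div]
  · simp only [hGt.2 x hx, ← hN]
    exact div_self hpos
  · have : ET (n+1) (fun x => (G x - α) / EH (n+1) U) = ET (n+1) G / EH (n+1) U ^ 2 := by
      rw [ET, ET, Finset.sum_div]
      refine Finset.sum_congr rfl fun w _ => ?_
      rw [dE, dE, Finset.sum_div]
      refine Finset.sum_congr rfl fun i _ => ?_
      rw [← div_pow]; congr 1; ring
    rw [this, hET]
    field_simp

/-! ### Partition functions -/

/-- Precomposition with a permutation of the coordinates. -/
def fp (f : X → ℝ) (π : P3) : X → ℝ := fun x => f (fun i => x (π i))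

lemma dE_perm (f : X → ℝ) (s : Fin 3 → X) (ρ : P3) : dE f (fun i => s (ρ i)) = dE f s := by
  have f1 : (1:Fin 3) + 2 = 0 := rfl
  have f2 : (2:Fin 3) + 1 = 0 := rfl
  have f3 : (2:Fin 3) + 2 = 1 := rfl
  have f4 : (1:Fin 3) + 1 = 2 := rfl
  simp only [dE, Fin.sum_univ_three, f1, f2, f3, f4, zero_add]
  apply fin3_perm_cases ρ <;> intro h0 h1 h2 <;> rw [h0, h1, h2] <;> ring

/-- The energy is invariant under the symmetries of the simplex. -/
lemma ET_fp (f : X → ℝ) (π : P3) (n : ℕ) : ET n (fp f π) = ET n f := by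
  rw [ET, ET, ← sum_cell_perm unitTri π⁻¹ n (dE f) (dE_perm f)]
  refine Finset.sum_congr rfl fun w _ => ?_
  have : ∀ x : X, (fun i => x (π i)) = comb (fun i => unitTri (π⁻¹ i)) x := by
    intro x
    funext k
    have := Equiv.sum_comp π (fun i => x i • unitTri (π⁻¹ i))
    have key : ∀ i, π⁻¹ (π i) = i := fun i => Equiv.symm_apply_apply π i
    simp only [Fin.sum_univ_three, key] at this
    rw [comb, ← this]
    exact (congrFun (comb_unitTri (fun i => x (π i))) k).symm
  simp only [dE, fp, this, cl, comb_cell]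
  have e2 : ∀ i, comb (fun i => unitTri (π⁻¹ i)) (unitTri i) = unitTri (π⁻¹ i) := fun i => by
    rw [show unitTri i = Pi.single i 1 from rfl, comb_single]
  simp only [e2]

lemma splx_perm {x : X} (hx : x ∈ Splx) (π : P3) : (fun i => x (π i)) ∈ Splx :=
  ⟨fun _ => hx.1 _, by rw [sum_perm_vert π x]; exact hx.2⟩

lemma hs_comp {x : X} {π : P3} {a b : Fin 3} (h : x ∈ hs (π a) (π b)) :
    (fun i => x (π i)) ∈ hs a b := ⟨splx_perm h.1 π, h.2.1, h.2.2⟩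

section
variable {f : X → ℝ}

open Classical in
/-- The difference of `f ∘ π` and its reflection, on the half of the simplex where `x (π 1) ≤ x (π 0)`,
and zero on the other half. It is continuous across the median by antisymmetry. For an admissible
`f` it is `1` on `hs (π 0) (π 2)`, and it vanishes on the side opposite to vertex `π 0`. -/
def kk (f : X → ℝ) (π : P3) : X → ℝ := fun x =>
  if x (π 1) ≤ x (π 0) then fp f π x - fp f (π * s01) x else 0

lemma fp_eq {π : P3} {x : X} (h : x (π 0) = x (π 1)) : fp f π x = fp f (π * s01) x := by
  obtain ⟨e0, e1, e2⟩ := pes_val π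
  unfold fp
  congr 1
  funext i
  fin_cases i
  · show x (π 0) = x ((π * s01) 0)
    rw [e0, h]
  · show x (π 1) = x ((π * s01) 1)
    rw [e1, h]
  · show x (π 2) = x ((π * s01) 2)
    rw [e2]

lemma kk_le_one (h0 : ∀ x, 0 ≤ f x) (h1 : ∀ x, f x ≤ 1) (π : P3) (x : X) : kk f π x ≤ 1 := by
  unfold kk fp
  split_ifs
  · linarith [h1 (fun i => x (π i)), h0 (fun i => x ((π * s01) i))]
  · norm_num

lemma kk_zero {π : P3} {x : X} (hx : x ∈ Splx) (h : x (π 0) = 0) : kk f π x = 0 := by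
  unfold kk
  split_ifs with hc
  · rw [fp_eq (by linarith [hx.1 (π 1)]), sub_self]
  · rfl

lemma kk_one (hf : TestT 0 1 f) {π : P3} {x : X} (h : x ∈ hs (π 0) (π 2)) : kk f π x = 1 := by
  obtain ⟨e0, e1, e2⟩ := pes_val π
  have h1 : x ∈ hs ((π * s01) 1) ((π * s01) 2) := by rw [e1, e2]; exact h
  unfold kk fp
  rw [if_pos, hf.2 _ (hs_comp h), hf.1 _ (hs_comp h1), sub_zero]
  have s := sum_perm_vert π x
  have := h.1.2
  have := h.2.1
  have := h.1.1 (π 0)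
  linarith

/-- No increment is lost by the cutoff in `kk`, since no cell crosses the median (`chamber`). -/
lemma kk_diff {n : ℕ} (w : W (n+1)) (π : P3) (i j : Fin 3) :
    |kk f π (cl (n+1) w i) - kk f π (cl (n+1) w j)| ≤
      |fp f π (cl (n+1) w i) - fp f π (cl (n+1) w j)| +
      |fp f (π * s01) (cl (n+1) w i) - fp f (π * s01) (cl (n+1) w j)| := by
  rcases chamber n w (π 1) (π 0) with h | h
  · unfold kk
    rw [if_pos (h i), if_pos (h j)]
    refine le_trans (le_of_eq ?_) (abs_sub _ _)
    congr 1; ring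
  · have : ∀ i, kk f π (cl (n+1) w i) = 0 := by
      intro i
      unfold kk
      split_ifs with hc
      · rw [fp_eq (le_antisymm (h i) hc), sub_self]
      · rfl
    rw [this, this]
    simp only [sub_self, abs_zero]
    positivity

/-- A cutoff function of vertex `0`: for an admissible `f` it is `1` on the halves nearer to `0` of the
two sides at `0`, and it vanishes on the side opposite to `0`. -/
def phi0 (f : X → ℝ) : X → ℝ := fun x => max 0 (max (kk f 1 x) (kk f (Equiv.swap 1 2) x))
/-- For an admissible `f`, this is `1` on `hs 1 0` and `0` on `hs 2 0`. -/
def eta (f : X → ℝ) : X → ℝ := fp f (pe 0)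
/-- The partition functions: the mass `1 - phi0 f` is divided between the vertices `1` and `2` in the
proportion given by `eta f`. -/
def phi (f : X → ℝ) : Fin 3 → X → ℝ :=
  ![phi0 f, fun x => (1 - phi0 f x) * eta f x, fun x => (1 - phi0 f x) * (1 - eta f x)]

lemma phi_sum (f : X → ℝ) (x : X) : phi f 0 x + phi f 1 x + phi f 2 x = 1 := by
  simp [phi]; ring

lemma phi0_mem (h0 : ∀ x, 0 ≤ f x) (h1 : ∀ x, f x ≤ 1) (x : X) : 0 ≤ phi0 f x ∧ phi0 f x ≤ 1 :=
  ⟨le_max_left _ _, max_le zero_le_one (max_le (kk_le_one h0 h1 _ _) (kk_le_one h0 h1 _ _))⟩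

/-- The `i`-th partition function vanishes on the side opposite to vertex `i`. -/
lemma phi_zero (hf : TestT 0 1 f) (h0 : ∀ x, 0 ≤ f x) (h1 : ∀ x, f x ≤ 1) {x : X} (hx : x ∈ Splx)
    (i : Fin 3) (hi : x i = 0) : phi f i x = 0 := by
  have es : (Equiv.swap 1 2 : P3) 0 = 0 ∧ (Equiv.swap 1 2 : P3) 2 = 1 := by decide
  obtain ⟨p0, p1, p2⟩ := pe_val 0
  have hsum := hx.2
  fin_cases i
  · change x 0 = 0 at hi
    show max 0 (max (kk f 1 x) (kk f (Equiv.swap 1 2) x)) = 0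
    rw [kk_zero hx (π := 1) hi, kk_zero hx (π := Equiv.swap 1 2) (by rw [es.1]; exact hi)]
    simp
  · change x 1 = 0 at hi
    show (1 - phi0 f x) * eta f x = 0
    rcases le_total (x 0) (x 2) with h | h
    · have : x ∈ hs (pe 0 1) (pe 0 2) := by
        rw [p1, p2]; exact ⟨hx, by simp; linarith, by simpa using h⟩
      rw [show eta f x = 0 from hf.1 _ (hs_comp this), mul_zero]
    · have : kk f 1 x = 1 := kk_one hf ⟨hx, by simp; linarith, by simpa using h⟩
      have h2 := (phi0_mem h0 h1 x).2
      have h3 : 1 ≤ phi0 f x := by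
        rw [← this]; exact le_trans (le_max_left _ _) (le_max_right _ _)
      rw [show phi0 f x = 1 by linarith]; ring
  · change x 2 = 0 at hi
    show (1 - phi0 f x) * (1 - eta f x) = 0
    rcases le_total (x 0) (x 1) with h | h
    · have : x ∈ hs (pe 0 0) (pe 0 2) := by
        rw [p0, p2]; exact ⟨hx, by simp; linarith, by simpa using h⟩
      rw [show eta f x = 1 from hf.2 _ (hs_comp this)]; ring
    · have : kk f (Equiv.swap 1 2) x = 1 :=
        kk_one hf (by rw [es.1, es.2]; exact ⟨hx, by linarith, h⟩)
      have h2 := (phi0_mem h0 h1 x).2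
      have h3 : 1 ≤ phi0 f x := by
        rw [← this]; exact le_trans (le_max_right _ _) (le_max_right _ _)
      rw [show phi0 f x = 1 by linarith]; ring

/-- Sum over all symmetric copies of `f` of the increments from `x` to `y`. -/
def SS (f : X → ℝ) (x y : X) : ℝ := ∑ π : P3, |fp f π x - fp f π y|

lemma max_diff (a b c d : ℝ) : |max a b - max c d| ≤ |a - c| + |b - d| :=
  (abs_max_sub_max_le_max a b c d).trans
    (max_le (le_add_of_nonneg_right (abs_nonneg _)) (le_add_of_nonneg_left (abs_nonneg _)))

lemma phi0_diff {n : ℕ} (w : W (n+1)) (i j : Fin 3) :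
    |phi0 f (cl (n+1) w i) - phi0 f (cl (n+1) w j)| ≤ SS f (cl (n+1) w i) (cl (n+1) w j) := by
  set x := cl (n+1) w i
  set y := cl (n+1) w j
  have a := max_diff 0 (max (kk f 1 x) (kk f (Equiv.swap 1 2) x)) 0
    (max (kk f 1 y) (kk f (Equiv.swap 1 2) y))
  have b := max_diff (kk f 1 x) (kk f (Equiv.swap 1 2) x) (kk f 1 y) (kk f (Equiv.swap 1 2) y)
  have c := kk_diff (f := f) w 1 i j
  have d := kk_diff (f := f) w (Equiv.swap 1 2) i j
  rw [sub_self, abs_zero, zero_add] at a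
  rw [one_mul] at c
  rw [SS, sum_perm3]
  have e1 := abs_nonneg (fp f (Equiv.swap 0 2) x - fp f (Equiv.swap 0 2) y)
  have e2 := abs_nonneg (fp f (Equiv.swap 0 1 * Equiv.swap 1 2) x -
    fp f (Equiv.swap 0 1 * Equiv.swap 1 2) y)
  unfold phi0
  linarith

lemma phi_diff (h0 : ∀ x, 0 ≤ f x) (h1 : ∀ x, f x ≤ 1) {n : ℕ} (w : W (n+1)) (k i j : Fin 3) :
    |phi f k (cl (n+1) w i) - phi f k (cl (n+1) w j)| ≤ 2 * SS f (cl (n+1) w i) (cl (n+1) w j) := by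
  have a := phi0_diff (f := f) w i j
  set x := cl (n+1) w i
  set y := cl (n+1) w j
  have b : |eta f x - eta f y| ≤ SS f x y :=
    Finset.single_le_sum (f := fun π => |fp f π x - fp f π y|) (fun _ _ => abs_nonneg _)
      (Finset.mem_univ (pe 0))
  have px := phi0_mem h0 h1 x
  have py := phi0_mem h0 h1 y
  have ex : 0 ≤ eta f x ∧ eta f x ≤ 1 := ⟨h0 _, h1 _⟩
  have ey : 0 ≤ eta f y ∧ eta f y ≤ 1 := ⟨h0 _, h1 _⟩
  have prod : ∀ p q r s : ℝ, 0 ≤ p → p ≤ 1 → 0 ≤ s → s ≤ 1 →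
      |p * q - r * s| ≤ |p - r| + |q - s| := by
    intro p q r s p0 p1 s0 s1
    have : p * q - r * s = p * (q - s) + (p - r) * s := by ring
    rw [this]
    refine (abs_add_le _ _).trans ?_
    rw [abs_mul, abs_mul, abs_of_nonneg p0, abs_of_nonneg s0]
    nlinarith [abs_nonneg (q - s), abs_nonneg (p - r)]
  fin_cases k
  · show |phi0 f x - phi0 f y| ≤ _
    linarith [abs_nonneg (eta f x - eta f y)]
  · show |(1 - phi0 f x) * eta f x - (1 - phi0 f y) * eta f y| ≤ _
    have := prod (1 - phi0 f x) (eta f x) (1 - phi0 f y) (eta f y) (by linarith) (by linarith)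
      ey.1 ey.2
    rw [show 1 - phi0 f x - (1 - phi0 f y) = -(phi0 f x - phi0 f y) by ring, abs_neg] at this
    linarith
  · show |(1 - phi0 f x) * (1 - eta f x) - (1 - phi0 f y) * (1 - eta f y)| ≤ _
    have := prod (1 - phi0 f x) (1 - eta f x) (1 - phi0 f y) (1 - eta f y) (by linarith)
      (by linarith) (by linarith) (by linarith)
    rw [show 1 - phi0 f x - (1 - phi0 f y) = -(phi0 f x - phi0 f y) by ring, abs_neg,
      show 1 - eta f x - (1 - eta f y) = -(eta f x - eta f y) by ring, abs_neg] at this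
    linarith

lemma SS_sq (f : X → ℝ) (x y : X) : SS f x y ^ 2 ≤ 6 * ∑ π : P3, (fp f π x - fp f π y) ^ 2 := by
  have := sq_sum_le_card_mul_sum_sq (s := (Finset.univ : Finset P3))
    (f := fun π => |fp f π x - fp f π y|)
  have c : (Finset.univ : Finset P3).card = 6 := by decide
  rw [c] at this
  simpa [SS, sq_abs] using this

/-- The energy of a combination of the partition functions is at most the product of the energy of the
coefficients, on a single triangle, and the energy of `f`. The constant is `288 = 6 * 6 * (4 + 4)`:
a factor `6` each for Cauchy–Schwarz over the symmetric copies and for their number, and `4` for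
the square of the bound of `phi_diff`, for each of `phi f 1` and `phi f 2`. -/
lemma cell_energy (h0 : ∀ x, 0 ≤ f x) (h1 : ∀ x, f x ≤ 1) (v : Fin 3 → ℝ) (n : ℕ) :
    ET (n+1) (fun x => v 0 * phi f 0 x + v 1 * phi f 1 x + v 2 * phi f 2 x) ≤
      288 * (∑ i : Fin 3, (v (i + 2) - v (i + 1)) ^ 2) * ET (n+1) f := by
  set E := ∑ i : Fin 3, (v (i + 2) - v (i + 1)) ^ 2 with hE
  have hE' : (v 1 - v 0) ^ 2 + (v 2 - v 0) ^ 2 ≤ E := by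
    have f1 : (1:Fin 3) + 2 = 0 := rfl
    have f2 : (2:Fin 3) + 1 = 0 := rfl
    have f3 : (2:Fin 3) + 2 = 1 := rfl
    have f4 : (1:Fin 3) + 1 = 2 := rfl
    rw [hE, Fin.sum_univ_three, zero_add, zero_add, f1, f2, f3, f4]
    nlinarith [sq_nonneg (v 2 - v 1)]
  have hE0 : 0 ≤ E := Finset.sum_nonneg fun _ _ => sq_nonneg _
  have pt : ∀ (w : W (n+1)) (i j : Fin 3),
      ((v 0 * phi f 0 (cl (n+1) w i) + v 1 * phi f 1 (cl (n+1) w i) + v 2 * phi f 2 (cl (n+1) w i)) -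
      (v 0 * phi f 0 (cl (n+1) w j) + v 1 * phi f 1 (cl (n+1) w j) +
        v 2 * phi f 2 (cl (n+1) w j))) ^ 2 ≤
      48 * E * ∑ π : P3, (fp f π (cl (n+1) w i) - fp f π (cl (n+1) w j)) ^ 2 := by
    intro w i j
    have d1 := phi_diff h0 h1 w 1 i j
    have d2 := phi_diff h0 h1 w 2 i j
    have sx := phi_sum f (cl (n+1) w i)
    have sy := phi_sum f (cl (n+1) w j)
    have ss := SS_sq f (cl (n+1) w i) (cl (n+1) w j)
    set x := cl (n+1) w i
    set y := cl (n+1) w j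
    have q1 : (phi f 1 x - phi f 1 y) ^ 2 ≤ 4 * SS f x y ^ 2 := by
      rw [← sq_abs]; nlinarith [abs_nonneg (phi f 1 x - phi f 1 y)]
    have q2 : (phi f 2 x - phi f 2 y) ^ 2 ≤ 4 * SS f x y ^ 2 := by
      rw [← sq_abs]; nlinarith [abs_nonneg (phi f 2 x - phi f 2 y)]
    have e : (v 0 * phi f 0 x + v 1 * phi f 1 x + v 2 * phi f 2 x) -
        (v 0 * phi f 0 y + v 1 * phi f 1 y + v 2 * phi f 2 y) =
        (v 1 - v 0) * (phi f 1 x - phi f 1 y) + (v 2 - v 0) * (phi f 2 x - phi f 2 y) := by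
      linear_combination v 0 * sx - v 0 * sy
    rw [e]
    set A := v 1 - v 0
    set B := v 2 - v 0
    set C := phi f 1 x - phi f 1 y
    set D := phi f 2 x - phi f 2 y
    set Q := ∑ π : P3, (fp f π x - fp f π y) ^ 2
    have hCD : C ^ 2 + D ^ 2 ≤ 48 * Q := by linarith
    calc (A * C + B * D) ^ 2 ≤ (A ^ 2 + B ^ 2) * (C ^ 2 + D ^ 2) := by
          nlinarith [sq_nonneg (A * D - B * C)]
      _ ≤ E * (48 * Q) := mul_le_mul hE' hCD (by positivity) hE0
      _ = 48 * E * Q := by ring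
  calc ET (n+1) (fun x => v 0 * phi f 0 x + v 1 * phi f 1 x + v 2 * phi f 2 x)
      ≤ ∑ w : W (n+1), ∑ i : Fin 3, 48 * E * ∑ π : P3,
        (fp f π (cl (n+1) w (i + 2)) - fp f π (cl (n+1) w (i + 1))) ^ 2 :=
        Finset.sum_le_sum fun w _ => Finset.sum_le_sum fun i _ => pt w _ _
    _ = 48 * E * ∑ π : P3, ET (n+1) (fp f π) := by
        simp only [ET, dE, ← Finset.mul_sum]
        congr 1
        symm
        rw [Finset.sum_comm]
        refine Finset.sum_congr rfl fun w _ => ?_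
        rw [Finset.sum_comm]
    _ = 288 * E * ET (n+1) f := by
        simp only [ET_fp, Finset.sum_const]
        have c : (Finset.univ : Finset P3).card = 6 := by decide
        rw [c, nsmul_eq_mul]; push_cast; ring

end

/-! ### Submultiplicativity of the capacity -/

lemma dE_congr {g h : X → ℝ} {c d : Fin 3 → X} (H : ∀ i, g (c i) = h (d i)) : dE g c = dE h d := by
  simp only [dE, H]

/-- Truncation to `[0, 1]`. -/
def trunc (f : X → ℝ) : X → ℝ := fun x => max 0 (min 1 (f x))

lemma trunc_mem (f : X → ℝ) (x : X) : 0 ≤ trunc f x ∧ trunc f x ≤ 1 :=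
  ⟨le_max_left _ _, max_le zero_le_one (min_le_left _ _)⟩

lemma trunc_test {f : X → ℝ} (hf : TestT 0 1 f) : TestT 0 1 (trunc f) :=
  ⟨fun x hx => by simp [trunc, hf.1 x hx], fun x hx => by simp [trunc, hf.2 x hx]⟩

lemma ET_trunc (f : X → ℝ) (n : ℕ) : ET n (trunc f) ≤ ET n f := by
  refine Finset.sum_le_sum fun w _ => Finset.sum_le_sum fun i _ => ?_
  rw [sq_le_sq]
  unfold trunc
  refine (abs_max_sub_max_le_max 0 _ 0 _).trans ?_
  rw [sub_self, abs_zero]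
  refine max_le (abs_nonneg _) ((abs_min_sub_min_le_max 1 _ 1 _).trans ?_)
  rw [sub_self, abs_zero]
  exact max_le (abs_nonneg _) le_rfl

/-- A point of a half side lying in a cell is a combination of vertices in the half side. -/
lemma hs_comb {m : ℕ} (w : W (m+1)) {a b : Fin 3} (hab : a ≠ b) {l : X} (hl : l ∈ Splx)
    (h : comb (cl (m+1) w) l ∈ hs a b) (i : Fin 3) (hi : 0 < l i) : cl (m+1) w i ∈ hs a b := by
  have hP : ∀ i, 0 ≤ 1 - (cl (m+1) w i a + cl (m+1) w i b) := fun i => by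
    linarith [pair_le (cl_mem (m+1) w i) hab]
  have gen : ∀ q : Fin 3 → ℝ, (∀ i, 0 ≤ q i) → l 0 * q 0 + l 1 * q 1 + l 2 * q 2 = 0 → q i = 0 := by
    intro q hq hs
    have p0 := mul_nonneg (hl.1 0) (hq 0)
    have p1 := mul_nonneg (hl.1 1) (hq 1)
    have p2 := mul_nonneg (hl.1 2) (hq 2)
    have : l i * q i = 0 := by
      fin_cases i
      · show l 0 * q 0 = 0; linarith
      · show l 1 * q 1 = 0; linarith
      · show l 2 * q 2 = 0; linarith
    rcases mul_eq_zero.1 this with h | h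
    · exact absurd h hi.ne'
    · exact h
  obtain ⟨_, h1, h2⟩ := h
  simp only [comb, Pi.add_apply, Pi.smul_apply, smul_eq_mul] at h1 h2
  have s1 := gen _ hP (by linarith [hl.2])
  refine ⟨cl_mem _ _ _, by linarith, ?_⟩
  rcases chamber m w a b with hc | hc
  · have := gen (fun i => cl (m+1) w i b - cl (m+1) w i a) (fun i => sub_nonneg.2 (hc i)) (by
      have p0 := mul_nonneg (hl.1 0) (sub_nonneg.2 (hc 0))
      have p1 := mul_nonneg (hl.1 1) (sub_nonneg.2 (hc 1))
      have p2 := mul_nonneg (hl.1 2) (sub_nonneg.2 (hc 2))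
      apply le_antisymm <;> linarith)
    change cl (m+1) w i b - cl (m+1) w i a = 0 at this
    linarith
  · exact hc i

/-- An admissible function of level `m + 1` is extended to each of its cells by the partition functions
of a function of level `n + 1`. The extensions agree on common sides by `phi_zero`, which makes the
result well defined. -/
lemma submult (m n : ℕ) {v f : X → ℝ} (hv : TestT 0 1 v) (hf : TestT 0 1 f) :
    ∃ h, TestT 0 1 h ∧ ET ((m + 1) + (n + 1)) h ≤ 288 * ET (m + 1) v * ET (n + 1) f := by
  set g := trunc f with hg
  have hgt := trunc_test hf
  rw [← hg] at hgt
  have g0 : ∀ x, 0 ≤ g x := fun x => (trunc_mem f x).1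
  have g1 : ∀ x, g x ≤ 1 := fun x => (trunc_mem f x).2
  set pt : W (m+1) × Splx → X := fun x => comb (cl (m+1) x.1) x.2.1 with hpt
  set val : W (m+1) × Splx → ℝ := fun x => v (cl (m+1) x.1 0) * phi g 0 x.2.1 +
    v (cl (m+1) x.1 1) * phi g 1 x.2.1 + v (cl (m+1) x.1 2) * phi g 2 x.2.1 with hval
  have hfac : Function.FactorsThrough val pt := by
    rintro ⟨w, l, hl⟩ ⟨w', l', hl'⟩ h
    obtain ⟨rfl, h2, -⟩ := face_to_face (m+1) w w' l l' hl hl' h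
    have key : ∀ i, v (cl (m+1) w i) * phi g i l = v (cl (m+1) w' i) * phi g i l := by
      intro i
      rcases (hl.1 i).eq_or_lt with h0 | h0
      · rw [phi_zero hgt g0 g1 hl i h0.symm]; ring
      · rw [h2 i h0]
    simp only [hval]
    rw [key 0, key 1, key 2]
  set H := Function.extend pt val 0 with hH
  have hHv : ∀ w l (hl : l ∈ Splx), H (comb (cl (m+1) w) l) = val (w, ⟨l, hl⟩) := fun w l hl =>
    hfac.extend_apply 0 (w, ⟨l, hl⟩)
  refine ⟨clampT 0 1 H, testT_clampT 0 1 H, ?_⟩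
  have hcl : ∀ w l (hl : l ∈ Splx), clampT 0 1 H (comb (cl (m+1) w) l) = val (w, ⟨l, hl⟩) := by
    intro w l hl
    have on : ∀ (a : Fin 3) (r : ℝ), a ≠ 2 → (∀ x ∈ hs a 2, v x = r) →
        comb (cl (m+1) w) l ∈ hs a 2 → val (w, ⟨l, hl⟩) = r := by
      intro a r ha hr hc
      have key : ∀ i, v (cl (m+1) w i) * phi g i l = r * phi g i l := by
        intro i
        rcases (hl.1 i).eq_or_lt with h0 | h0
        · rw [phi_zero hgt g0 g1 hl i h0.symm]; ring
        · rw [hr _ (hs_comb w ha hl hc i h0)]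
      simp only [hval]
      rw [key 0, key 1, key 2]
      linear_combination r * phi_sum g l
    rw [clampT]
    split_ifs with h1 h2
    · exact (on 1 0 (by decide) hv.1 h1).symm
    · exact (on 0 1 (by decide) hv.2 h2).symm
    · exact hHv w l hl
  have e1 : ET ((m + 1) + (n + 1)) (clampT 0 1 H) = ∑ w : W (m+1), ET (n+1)
      (fun x => v (cl (m+1) w 0) * phi g 0 x + v (cl (m+1) w 1) * phi g 1 x +
        v (cl (m+1) w 2) * phi g 2 x) := by
    rw [ET, sum_cell_add unitTri (m+1) (n+1) (dE (clampT 0 1 H))]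
    refine Finset.sum_congr rfl fun w _ => Finset.sum_congr rfl fun w' _ => dE_congr fun i => ?_
    rw [cell_eq_comb, hcl w _ (cl_mem _ _ _)]
  rw [e1]
  have e2 : ∀ w : W (m+1), ET (n+1) (fun x => v (cl (m+1) w 0) * phi g 0 x +
      v (cl (m+1) w 1) * phi g 1 x + v (cl (m+1) w 2) * phi g 2 x) ≤
      288 * dE v (cl (m+1) w) * ET (n+1) f := by
    intro w
    refine (cell_energy g0 g1 (fun i => v (cl (m+1) w i)) n).trans ?_
    refine mul_le_mul_of_nonneg_left (ET_trunc f (n+1)) ?_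
    exact mul_nonneg (by norm_num) (Finset.sum_nonneg fun _ _ => sq_nonneg _)
  refine (Finset.sum_le_sum fun w _ => e2 w).trans (le_of_eq ?_)
  rw [← Finset.sum_mul, ← Finset.mul_sum]; rfl

/-- The capacity of the triangulation: the least energy of a function with boundary values `0`, `1`. -/
def CT (n : ℕ) : ℝ := sInf {e | ∃ g, TestT 0 1 g ∧ e = ET n g}

lemma CT_bdd (n : ℕ) : BddBelow {e | ∃ g, TestT 0 1 g ∧ e = ET n g} :=
  ⟨0, by rintro e ⟨g, _, rfl⟩; exact ET_nonneg n g⟩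

lemma CT_ne (n : ℕ) : {e | ∃ g, TestT 0 1 g ∧ e = ET n g}.Nonempty :=
  ⟨_, clampT 0 1 0, testT_clampT 0 1 0, rfl⟩

lemma CT_le {n : ℕ} {g : X → ℝ} (hg : TestT 0 1 g) : CT n ≤ ET n g :=
  csInf_le (CT_bdd n) ⟨g, hg, rfl⟩

lemma card_W : ∀ n, Fintype.card (W n) = 6 ^ n
  | 0 => rfl
  | n + 1 => by
      have : Fintype.card (W (n+1)) = Fintype.card (W n × P3) := rfl
      rw [this, Fintype.card_prod, card_W n, pow_succ]
      congr 1

lemma EH_indB (n : ℕ) : EH n indB ≤ 3 * 6 ^ n := by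
  have hb : ∀ x, 0 ≤ indB x ∧ indB x ≤ 1 := by
    intro x; unfold indB; split_ifs <;> norm_num
  have : EH n indB ≤ ∑ w : W n, ∑ i : Fin 3, (1:ℝ) := by
    refine Finset.sum_le_sum fun w _ => Finset.sum_le_sum fun i _ => ?_
    have a := hb (emid (cl n w) i)
    have b := hb (ctr (cl n w))
    nlinarith
  refine this.trans (le_of_eq ?_)
  simp [card_W]; ring

/-- Duality with the indicator potential `indB` bounds the capacity from below. -/
lemma CT_lower (n : ℕ) : (1:ℝ) / (3 * 6 ^ (n + 1)) ≤ CT (n + 1) := by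
  refine le_csInf (CT_ne _) ?_
  rintro e ⟨g, hg, rfl⟩
  have h := ET_mul_EH n hg testH_indB
  have h2 := EH_indB (n+1)
  rw [div_le_iff₀ (by positivity)]
  have := mul_le_mul_of_nonneg_left h2 (ET_nonneg (n+1) g)
  linarith

lemma CT_pos (n : ℕ) : 0 < CT (n + 1) := lt_of_lt_of_le (by positivity) (CT_lower n)

/-- Submultiplicativity of the capacity up to a constant. -/
lemma CT_submult (m n : ℕ) : CT ((m + 1) + (n + 1)) ≤ 288 * CT (m + 1) * CT (n + 1) := by
  have step : ∀ v, TestT 0 1 v → CT ((m + 1) + (n + 1)) ≤ 288 * ET (m+1) v * CT (n + 1) := by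
    intro v hv
    have hpos : 0 < 288 * ET (m+1) v :=
      mul_pos (by norm_num) (lt_of_lt_of_le (CT_pos m) (CT_le hv))
    rw [← div_le_iff₀' hpos]
    refine le_csInf (CT_ne _) ?_
    rintro e ⟨f, hf, rfl⟩
    rw [div_le_iff₀' hpos]
    obtain ⟨h, ht, hh⟩ := submult m n hv hf
    exact (CT_le ht).trans hh
  have hpos : 0 < 288 * CT (n + 1) := mul_pos (by norm_num) (CT_pos n)
  have : CT ((m + 1) + (n + 1)) / (288 * CT (n + 1)) ≤ CT (m + 1) := by
    refine le_csInf (CT_ne _) ?_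
    rintro e ⟨v, hv, rfl⟩
    rw [div_le_iff₀ hpos]
    linarith [step v hv]
  rw [div_le_iff₀ hpos] at this
  linarith

/-- Fekete's lemma for `log (288 * CT n)`. -/
lemma CT_limit : ∃ L : ℝ, Filter.Tendsto (fun n : ℕ => Real.log (CT n) / n) Filter.atTop
    (nhds L) := by
  -- the estimates for `CT` start at level `1`; the value at `0` is irrelevant for the limit
  set u : ℕ → ℝ := fun n => if n = 0 then 0 else Real.log (288 * CT n) with hu
  have hpos : ∀ n, n ≠ 0 → 0 < CT n := by
    intro n hn
    obtain ⟨k, rfl⟩ := Nat.exists_eq_succ_of_ne_zero hn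
    exact CT_pos k
  have hsub : Subadditive u := by
    intro m n
    rcases Nat.eq_zero_or_pos m with rfl | hm
    · simp [hu]
    rcases Nat.eq_zero_or_pos n with rfl | hn
    · simp [hu]
    obtain ⟨m, rfl⟩ := Nat.exists_eq_succ_of_ne_zero hm.ne'
    obtain ⟨n, rfl⟩ := Nat.exists_eq_succ_of_ne_zero hn.ne'
    have pm := CT_pos m; have pn := CT_pos n
    have pmn : 0 < CT (m.succ + n.succ) := hpos _ (by omega)
    simp only [hu]
    rw [if_neg (by omega), if_neg (by omega), if_neg (by omega),
      ← Real.log_mul (by positivity) (by positivity)]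
    refine Real.log_le_log (by positivity) ?_
    have := CT_submult m n
    simp only [Nat.succ_eq_add_one] at *
    linarith
  have hbdd : BddBelow (Set.range fun n => u n / n) := by
    refine ⟨-(Real.log 6), ?_⟩
    rintro _ ⟨n, rfl⟩
    rcases Nat.eq_zero_or_pos n with rfl | hn
    · simp; positivity
    have hn' : (0:ℝ) < n := by exact_mod_cast hn
    simp only
    rw [le_div_iff₀ hn']
    simp only [hu]
    rw [if_neg hn.ne']
    obtain ⟨k, rfl⟩ := Nat.exists_eq_succ_of_ne_zero hn.ne'
    have h := CT_lower k
    have : -Real.log 6 * ((k.succ : ℕ) : ℝ) = Real.log (1 / 6 ^ (k + 1)) := by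
      rw [one_div, Real.log_inv, Real.log_pow]; push_cast; ring
    rw [this]
    refine Real.log_le_log (by positivity) ?_
    have e : (1:ℝ) / (3 * 6 ^ (k+1)) = (1 / 6 ^ (k+1)) / 3 := by field_simp
    rw [e] at h
    have p : (0:ℝ) < 1 / 6 ^ (k+1) := by positivity
    simp only [Nat.succ_eq_add_one]
    linarith
  refine ⟨hsub.lim, ?_⟩
  have h1 := hsub.tendsto_lim hbdd
  have h2 : Filter.Tendsto (fun n : ℕ => Real.log 288 / (n:ℝ)) Filter.atTop (nhds 0) :=
    tendsto_const_div_atTop_nhds_zero_nat _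
  have h3 := h1.sub h2
  rw [sub_zero] at h3
  refine h3.congr' ?_
  filter_upwards [Filter.eventually_ne_atTop 0] with n hn
  simp only [hu]
  rw [if_neg hn, Real.log_mul (by norm_num) (hpos n hn).ne']
  ring

/-! ### The hexagonal embedding -/

/-- The corners `0`, `2`, `4` of the hexagon, the images of the vertices of the simplex. The remaining
corners are their opposites. -/
def hu : Fin 3 → Pt :=
  ![(1, 0), (-(1/2), Real.sqrt 3 / 2), (-(1/2), -(Real.sqrt 3 / 2))]

lemma hu_comb (a b c : ℝ) : a • hu 0 + b • hu 1 + c • hu 2 =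
    (a - b / 2 - c / 2, (b - c) * (Real.sqrt 3 / 2)) := by
  ext <;> simp [hu] <;> ring

/-- The median of the three coordinates. -/
def med (x : X) : ℝ := max (min (x 0) (x 1)) (min (max (x 0) (x 1)) (x 2))

/-- The identity on nonnegative and multiplication by `2` on nonpositive numbers. -/
def kink (s : ℝ) : ℝ := min s (2 * s)

/-- The map from the simplex to the hexagon that is affine on each cell of level `1`, and sends vertices
and midpoints of sides to corners of the hexagon and the barycentre to its centre. -/
def Psi (x : X) : Pt :=
  kink (x 0 - med x) • hu 0 + kink (x 1 - med x) • hu 1 + kink (x 2 - med x) • hu 2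

lemma kink_nonneg {s : ℝ} (h : 0 ≤ s) : kink s = s := min_eq_left (by linarith)
lemma kink_nonpos {s : ℝ} (h : s ≤ 0) : kink s = 2 * s := min_eq_right (by linarith)

lemma kink_inj {s t : ℝ} (h : kink s = kink t) : s = t := by
  rcases le_total 0 s with a | a <;> rcases le_total 0 t with b | b <;>
    simp only [kink_nonneg, kink_nonpos, a, b] at h <;> linarith

lemma med_sorted {x : X} {σ : P3} (h1 : x (σ 1) ≤ x (σ 0)) (h2 : x (σ 2) ≤ x (σ 1)) :
    med x = x (σ 1) := by
  unfold med
  apply fin3_perm_cases σ <;> intro r0 r1 r2 <;> rw [r0, r1] at h1 <;> rw [r1, r2] at h2 <;>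
    rw [r1] <;> rcases le_total (x 0) (x 1) with h | h <;> simp only [h, min_eq_left, min_eq_right,
      max_eq_left, max_eq_right] <;> apply le_antisymm <;>
    first
    | (apply max_le <;> first | linarith | (apply min_le_of_left_le; linarith) | (apply min_le_of_right_le; linarith))
    | (apply le_max_of_le_left; linarith)
    | (apply le_max_of_le_right; apply le_min <;> linarith)

lemma exists_sorted (x : X) : ∃ σ : P3, x (σ 1) ≤ x (σ 0) ∧ x (σ 2) ≤ x (σ 1) := by
  have a := (Tuple.monotone_sort x) (show (0 : Fin 3) ≤ 1 by decide)
  have b := (Tuple.monotone_sort x) (show (1 : Fin 3) ≤ 2 by decide)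
  refine ⟨Tuple.sort x * Equiv.swap 0 2, ?_, ?_⟩
  · exact b
  · exact a

/-- `Psi` is affine on each chamber of points with a given order of coordinates. -/
lemma Psi_sorted {x : X} {σ : P3} (h1 : x (σ 1) ≤ x (σ 0)) (h2 : x (σ 2) ≤ x (σ 1)) :
    Psi x = (x (σ 0) - x (σ 1)) • hu (σ 0) + (2 * (x (σ 2) - x (σ 1))) • hu (σ 2) := by
  have hm := med_sorted h1 h2
  have := Equiv.sum_comp σ (fun k => kink (x k - med x) • hu k)
  simp only [Fin.sum_univ_three] at this
  rw [Psi, ← this, hm, kink_nonneg (sub_nonneg.2 h1), kink_nonpos (sub_nonpos.2 h2), sub_self,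
    kink_nonneg le_rfl, zero_smul, add_zero]

/-- The middle one of the three coefficients vanishes. -/
lemma med_shift (x : X) {σ : P3} (h1 : x (σ 1) ≤ x (σ 0)) (h2 : x (σ 2) ≤ x (σ 1)) (c : ℝ) :
    med (fun k => kink (x k - med x) + c) = c := by
  have hm := med_sorted h1 h2
  rw [med_sorted (σ := σ)]
  · rw [hm, sub_self, kink_nonneg le_rfl, zero_add]
  · rw [hm, sub_self, kink_nonneg le_rfl, kink_nonneg (sub_nonneg.2 h1)]; linarith
  · rw [hm, sub_self, kink_nonneg le_rfl, kink_nonpos (sub_nonpos.2 h2)]; linarith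

lemma Psi_inj : Set.InjOn Psi Splx := by
  intro x hx y hy h
  obtain ⟨σ, s1, s2⟩ := exists_sorted x
  obtain ⟨τ, t1, t2⟩ := exists_sorted y
  set d : X := fun k => kink (x k - med x) with hd
  set d' : X := fun k => kink (y k - med y) with hd'
  have h3 : (0:ℝ) < Real.sqrt 3 / 2 := by positivity
  have hP : (d 0 - d 1 / 2 - d 2 / 2, (d 1 - d 2) * (Real.sqrt 3 / 2)) =
      (d' 0 - d' 1 / 2 - d' 2 / 2, (d' 1 - d' 2) * (Real.sqrt 3 / 2)) := by
    rw [← hu_comb, ← hu_comb]; exact h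
  obtain ⟨p1, p2⟩ := Prod.mk.inj hP
  have p3 := mul_right_cancel₀ h3.ne' p2
  have hs : ∀ k, d k = d' k + (d 0 - d' 0) := by
    intro k; fin_cases k <;> simp only [Fin.zero_eta, Fin.mk_one, Fin.reduceFinMk] <;> linarith
  have m1 := med_shift x s1 s2 0
  have m2 := med_shift y t1 t2 (d 0 - d' 0)
  have : (fun k => kink (x k - med x) + 0) = fun k => kink (y k - med y) + (d 0 - d' 0) := by
    funext k; rw [add_zero]; exact hs k
  rw [this, m2] at m1
  have hk : ∀ k, x k - med x = y k - med y := fun k => kink_inj (by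
    have := hs k; rw [m1, add_zero] at this; exact this)
  have a := hk 0; have b := hk 1; have c := hk 2
  have e1 := hx.2; have e2 := hy.2
  funext k
  have := hk k
  linarith

/-- All points of a cell lie in one common chamber. -/
lemma cl_sorted : ∀ (n : ℕ) (w : W (n+1)), ∃ σ : P3, ∀ j,
    cl (n+1) w j (σ 1) ≤ cl (n+1) w j (σ 0) ∧ cl (n+1) w j (σ 2) ≤ cl (n+1) w j (σ 1)
  | 0, (w, σ) => by
      refine ⟨σ, fun j => ?_⟩
      show sub σ unitTri j (σ 1) ≤ sub σ unitTri j (σ 0) ∧ sub σ unitTri j (σ 2) ≤ sub σ unitTri j (σ 1)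
      fin_cases j <;> simp [unitTri, σ.injective.eq_iff] 
  | n + 1, (w, τ) => by
      obtain ⟨σ, h⟩ := cl_sorted n w
      refine ⟨σ, fun j => ?_⟩
      show sub τ (cl (n+1) w) j (σ 1) ≤ sub τ (cl (n+1) w) j (σ 0) ∧
        sub τ (cl (n+1) w) j (σ 2) ≤ sub τ (cl (n+1) w) j (σ 1)
      have a := h (τ 0); have b := h (τ 1); have c := h (τ 2)
      fin_cases j
      · exact a
      · simp only [Fin.mk_one, sub_one', Pi.smul_apply, Pi.add_apply, smul_eq_mul]
        constructor <;> linarith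
      · simp only [Fin.reduceFinMk, sub_two', Pi.smul_apply, Pi.add_apply, smul_eq_mul]
        constructor <;> linarith

/-- The cell `w` in the hexagonal embedding. -/
def hc (n : ℕ) (w : W n) : Fin 3 → Pt := fun j => Psi (cl n w j)

/-- From level `1` on, the hexagonal embedding commutes with subdivision: the cells lie in chambers,
where `Psi` is affine. -/
lemma hc_succ (n : ℕ) (w : W (n+1)) (τ : P3) : hc (n+2) (w, τ) = sub τ (hc (n+1) w) := by
  obtain ⟨σ, h⟩ := cl_sorted n w
  obtain ⟨σ', h'⟩ := cl_sorted (n+1) (w, τ)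
  have hs : ∀ j, cl (n+2) (w, τ) j (σ 1) ≤ cl (n+2) (w, τ) j (σ 0) ∧
      cl (n+2) (w, τ) j (σ 2) ≤ cl (n+2) (w, τ) j (σ 1) := by
    intro j
    show sub τ (cl (n+1) w) j (σ 1) ≤ sub τ (cl (n+1) w) j (σ 0) ∧
        sub τ (cl (n+1) w) j (σ 2) ≤ sub τ (cl (n+1) w) j (σ 1)
    have a := h (τ 0); have b := h (τ 1); have c := h (τ 2)
    fin_cases j
    · exact a
    · simp only [Fin.mk_one, sub_one', Pi.smul_apply, Pi.add_apply, smul_eq_mul]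
      constructor <;> linarith
    · simp only [Fin.reduceFinMk, sub_two', Pi.smul_apply, Pi.add_apply, smul_eq_mul]
      constructor <;> linarith
  have e1 : ∀ j, hc (n+1) w j = (cl (n+1) w j (σ 0) - cl (n+1) w j (σ 1)) • hu (σ 0) +
      (2 * (cl (n+1) w j (σ 2) - cl (n+1) w j (σ 1))) • hu (σ 2) :=
    fun j => Psi_sorted (h j).1 (h j).2
  funext j
  have e2 : hc (n+2) (w, τ) j = _ := Psi_sorted (hs j).1 (hs j).2
  rw [e2]
  have e3 : cl (n+2) (w, τ) = sub τ (cl (n+1) w) := rfl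
  rw [e3]
  fin_cases j
  · exact (e1 _).symm
  · simp only [Fin.mk_one, sub_one', Pi.smul_apply, Pi.add_apply, smul_eq_mul, e1]; module
  · simp only [Fin.reduceFinMk, sub_two', Pi.smul_apply, Pi.add_apply, smul_eq_mul, e1]; module

lemma hu_sum (σ : P3) : hu (σ 0) + hu (σ 1) + hu (σ 2) = 0 := by
  rw [sum_perm_vert]
  have := hu_comb 1 1 1
  simp only [one_smul] at this
  rw [this]; ext <;> simp; norm_num

/-- The first-level cell with index `σ`. -/
def w1 (σ : P3) : W 1 := ((), σ)

lemma hc_one (σ : P3) : hc 1 (w1 σ) = ![hu (σ 0), -hu (σ 2), 0] := by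
  have hs : ∀ j, sub σ unitTri j (σ 1) ≤ sub σ unitTri j (σ 0) ∧
      sub σ unitTri j (σ 2) ≤ sub σ unitTri j (σ 1) := by
    intro j
    fin_cases j <;> simp [unitTri, σ.injective.eq_iff]
  funext j
  have e2 : hc 1 (w1 σ) j = (sub σ unitTri j (σ 0) - sub σ unitTri j (σ 1)) • hu (σ 0) +
      (2 * (sub σ unitTri j (σ 2) - sub σ unitTri j (σ 1))) • hu (σ 2) :=
    Psi_sorted (hs j).1 (hs j).2
  rw [e2]
  clear e2
  fin_cases j <;> simp [unitTri, σ.injective.eq_iff]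

/-- Half sides of the simplex correspond to sides of the hexagon. -/
lemma Psi_side {x : X} (hx : x ∈ Splx) (σ : P3) :
    Psi x ∈ segment ℝ (hu (σ 0)) (-hu (σ 2)) ↔ x ∈ hs (σ 0) (σ 1) := by
  have key : ∀ y ∈ hs (σ 0) (σ 1), Psi y = (y (σ 0) - y (σ 1)) • hu (σ 0) +
      (2 * y (σ 1)) • (-hu (σ 2)) := by
    rintro y ⟨h, h1, h2⟩
    have h3 : y (σ 0) + y (σ 1) + y (σ 2) = y 0 + y 1 + y 2 := sum_perm_vert σ y
    have h4 : y (σ 2) = 0 := by have := h.2; linarith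
    rw [Psi_sorted h2 (by rw [h4]; exact h.1 _), h4]
    module
  constructor
  · rintro ⟨a, b, ha, hb, hab, h⟩
    set y : X := fun k => if k = σ 0 then a + b / 2 else if k = σ 1 then b / 2 else 0 with hy
    have y0 : y (σ 0) = a + b / 2 := by simp [hy]
    have y1 : y (σ 1) = b / 2 := by simp [hy, σ.injective.eq_iff]
    have y2 : y (σ 2) = 0 := by simp [hy, σ.injective.eq_iff]
    have h3 : y (σ 0) + y (σ 1) + y (σ 2) = y 0 + y 1 + y 2 := sum_perm_vert σ y
    have hyS : y ∈ Splx := by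
      refine ⟨fun k => ?_, by rw [← h3, y0, y1, y2]; linarith⟩
      simp only [hy]; split_ifs <;> positivity
    have hyh : y ∈ hs (σ 0) (σ 1) := ⟨hyS, by rw [y0, y1]; linarith, by rw [y0, y1]; linarith⟩
    have e := key y hyh
    rw [y0, y1, show a + b / 2 - b / 2 = a by ring, show 2 * (b / 2) = b by ring, h] at e
    rw [← Psi_inj hyS hx e]; exact hyh
  · intro h
    rw [key x h]
    obtain ⟨_, h1, h2⟩ := h
    exact ⟨_, _, sub_nonneg.2 h2, by linarith [hx.1 (σ 1)], by linarith, rfl⟩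

lemma hex0 : hexCorner 0 = hu 0 := by simp [hexCorner, hu]
lemma hex1 : hexCorner 1 = -hu 2 := by simp [hexCorner, hu]
lemma hex2 : hexCorner 2 = hu 1 := by
  have e : (2:ℝ) * (Real.pi / 3) = Real.pi - Real.pi / 3 := by ring
  simp [hexCorner, hu, e, Real.cos_pi_sub, Real.sin_pi_sub]
lemma hex3 : hexCorner 3 = -hu 0 := by
  have e : (3:ℝ) * (Real.pi / 3) = Real.pi := by ring
  simp [hexCorner, hu, e]
lemma hex4 : hexCorner 4 = hu 2 := by
  have e : (4:ℝ) * (Real.pi / 3) = Real.pi / 3 + Real.pi := by ring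
  simp [hexCorner, hu, e, Real.cos_add_pi, Real.sin_add_pi]
lemma hex5 : hexCorner 5 = -hu 1 := by
  have e : (5:ℝ) * (Real.pi / 3) = 2 * Real.pi - Real.pi / 3 := by ring
  simp [hexCorner, hu, e, Real.cos_two_pi_sub, Real.sin_two_pi_sub]
lemma hex6 : hexCorner 6 = hu 0 := by
  have e : (6:ℝ) * (Real.pi / 3) = 2 * Real.pi := by ring
  simp [hexCorner, hu, e]

lemma side0 {x : X} (hx : x ∈ Splx) : Psi x ∈ hexSide 0 ↔ x ∈ hs 0 1 := by
  rw [hexSide, hex0, hex1]; exact Psi_side hx 1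
lemma side1 {x : X} (hx : x ∈ Splx) : Psi x ∈ hexSide 1 ↔ x ∈ hs 1 0 := by
  rw [hexSide, hex1, hex2, segment_symm]; exact Psi_side hx (Equiv.swap 0 1)
lemma side2 {x : X} (hx : x ∈ Splx) : Psi x ∈ hexSide 2 ↔ x ∈ hs 1 2 := by
  rw [hexSide, hex2, hex3]; exact Psi_side hx (Equiv.swap 0 1 * Equiv.swap 1 2)
lemma side3 {x : X} (hx : x ∈ Splx) : Psi x ∈ hexSide 3 ↔ x ∈ hs 2 1 := by
  rw [hexSide, hex3, hex4, segment_symm]; exact Psi_side hx (Equiv.swap 0 2)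
lemma side4 {x : X} (hx : x ∈ Splx) : Psi x ∈ hexSide 4 ↔ x ∈ hs 2 0 := by
  rw [hexSide, hex4, hex5]; exact Psi_side hx (Equiv.swap 1 2 * Equiv.swap 0 1)
lemma side5 {x : X} (hx : x ∈ Splx) : Psi x ∈ hexSide 5 ↔ x ∈ hs 0 2 := by
  rw [hexSide, hex5, hex6, segment_symm]; exact Psi_side hx (Equiv.swap 1 2)

/-- The ordered triple as a function. -/
def tv (t : Pt × Pt × Pt) : Fin 3 → Pt := ![t.1, t.2.1, t.2.2]

lemma tv_inj {t s : Pt × Pt × Pt} (h : tv t = tv s) : t = s := by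
  have a : t.1 = s.1 := congrFun h 0
  have b : t.2.1 = s.2.1 := congrFun h 1
  have c : t.2.2 = s.2.2 := congrFun h 2
  exact Prod.ext a (Prod.ext b c)

lemma tv_mk (s : Fin 3 → Pt) : tv (s 0, s 1, s 2) = s := by
  funext i; fin_cases i <;> rfl

/-- The six children in the sense of `children` are those of `sub`, up to the order of vertices; the
orders have been chosen to agree. -/
lemma children_sub {t c : Pt × Pt × Pt} (h : c ∈ children t) : ∃ σ : P3, tv c = sub σ (tv t) := by
  simp only [children, Set.mem_insert_iff, Set.mem_singleton_iff] at h
  have b : ∀ σ : P3, sub σ (tv t) 2 = bary t.1 t.2.1 t.2.2 := by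
    intro σ; rw [sub_two', sum_perm_vert]; rfl
  have gen : ∀ σ : P3, c = ((tv t) (σ 0), mpt (tv t (σ 0)) (tv t (σ 1)), bary t.1 t.2.1 t.2.2) →
      ∃ σ : P3, tv c = sub σ (tv t) := by
    rintro σ rfl
    refine ⟨σ, ?_⟩
    rw [← b σ]
    exact tv_mk (sub σ (tv t))
  have mc : ∀ a b : Pt, mpt a b = mpt b a := fun a b => by rw [mpt, mpt, add_comm]
  rcases h with h | h | h | h | h | h
  · exact gen 1 (by rw [h]; rfl)
  · exact gen (Equiv.swap 0 1) (by rw [h, mc t.1]; rfl)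
  · exact gen (Equiv.swap 0 1 * Equiv.swap 1 2) (by rw [h]; rfl)
  · exact gen (Equiv.swap 0 2) (by rw [h, mc t.2.1]; rfl)
  · exact gen (Equiv.swap 1 2) (by rw [h]; rfl)
  · exact gen (Equiv.swap 1 2 * Equiv.swap 0 1) (by rw [h, mc t.1]; rfl)

lemma sub_children (t : Pt × Pt × Pt) (σ : P3) :
    (sub σ (tv t) 0, sub σ (tv t) 1, sub σ (tv t) 2) ∈ children t := by
  simp only [children, Set.mem_insert_iff, Set.mem_singleton_iff]
  have b : sub σ (tv t) 2 = bary t.1 t.2.1 t.2.2 := by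
    rw [sub_two', sum_perm_vert]; rfl
  have mc : ∀ a b : Pt, mpt a b = mpt b a := fun a b => by rw [mpt, mpt, add_comm]
  have m : sub σ (tv t) 1 = mpt (tv t (σ 0)) (tv t (σ 1)) := rfl
  rw [b, m, sub_zero']
  apply fin3_perm_cases σ <;> intro r0 r1 r2 <;> rw [r0, r1]
  · exact Or.inl rfl
  · exact Or.inr (Or.inr (Or.inr (Or.inr (Or.inl rfl))))
  · rw [mc]; exact Or.inr (Or.inl rfl)
  · exact Or.inr (Or.inr (Or.inl rfl))
  · rw [mc]; exact Or.inr (Or.inr (Or.inr (Or.inr (Or.inr rfl))))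
  · rw [mc]; exact Or.inr (Or.inr (Or.inr (Or.inl rfl)))

/-- Every triangle of `T_n` is a cell, up to the order of its vertices. -/
lemma TriSet_hc : ∀ (n : ℕ) (t : Pt × Pt × Pt), t ∈ TriSet (n+1) →
    ∃ (w : W (n+1)) (π : P3), tv t = fun i => hc (n+1) w (π i)
  | 0, t, h => by
      obtain ⟨i, rfl⟩ := h
      have g1 : ∀ σ : P3, ∀ a b : Pt, a = hu (σ 0) → b = -hu (σ 2) → ∃ (w : W 1) (π : P3),
          tv (a, b, ((0:ℝ), (0:ℝ))) = fun i => hc 1 w (π i) := by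
        rintro σ a b rfl rfl
        refine ⟨w1 σ, 1, ?_⟩
        rw [hc_one]
        funext i; fin_cases i <;> rfl
      have g2 : ∀ σ : P3, ∀ a b : Pt, b = hu (σ 0) → a = -hu (σ 2) → ∃ (w : W 1) (π : P3),
          tv (a, b, ((0:ℝ), (0:ℝ))) = fun i => hc 1 w (π i) := by
        rintro σ a b rfl rfl
        refine ⟨w1 σ, Equiv.swap 0 1, ?_⟩
        rw [hc_one]
        funext i; fin_cases i <;> rfl
      fin_cases i
      · exact g1 1 _ _ hex0 hex1
      · exact g2 (Equiv.swap 0 1) _ _ hex2 hex1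
      · exact g1 (Equiv.swap 0 1 * Equiv.swap 1 2) _ _ hex2 hex3
      · exact g2 (Equiv.swap 0 2) _ _ hex4 hex3
      · exact g1 (Equiv.swap 1 2 * Equiv.swap 0 1) _ _ hex4 hex5
      · exact g2 (Equiv.swap 1 2) _ _ hex6 hex5
  | n + 1, t, h => by
      have h' : t ∈ ⋃ t ∈ TriSet (n + 1), children t := h
      simp only [Set.mem_iUnion] at h'
      obtain ⟨s, hs, hc'⟩ := h'
      obtain ⟨w, π, e⟩ := TriSet_hc n s hs
      obtain ⟨σ, e2⟩ := children_sub hc'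
      refine ⟨(w, π * σ), 1, ?_⟩
      rw [e2, e, sub_comp, hc_succ]; rfl

/-- Every cell is a triangle of `T_n`, up to the order of its vertices. -/
lemma hc_TriSet : ∀ (n : ℕ) (w : W (n+1)),
    ∃ t ∈ TriSet (n+1), ∃ π : P3, tv t = fun i => hc (n+1) w (π i)
  | 0, w => by
      set σ : P3 := w.2
      show ∃ t ∈ TriSet 1, ∃ π : P3, tv t = fun i => hc 1 (w1 σ) (π i)
      have g1 : ∀ i : Fin 6, hexCorner i = hu (σ 0) → hexCorner (i + 1) = -hu (σ 2) →
          ∃ t ∈ TriSet 1, ∃ π : P3, tv t = fun i => hc 1 (w1 σ) (π i) := by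
        intro i ha hb
        refine ⟨_, ⟨i, rfl⟩, 1, ?_⟩
        rw [hc_one, ha, hb]
        funext i; fin_cases i <;> rfl
      have g2 : ∀ i : Fin 6, hexCorner (i + 1) = hu (σ 0) → hexCorner i = -hu (σ 2) →
          ∃ t ∈ TriSet 1, ∃ π : P3, tv t = fun i => hc 1 (w1 σ) (π i) := by
        intro i ha hb
        refine ⟨_, ⟨i, rfl⟩, Equiv.swap 0 1, ?_⟩
        rw [hc_one, ha, hb]
        funext i; fin_cases i <;> rfl
      apply fin3_perm_cases σ <;> intro r0 r1 r2
      · exact g1 0 (by rw [r0]; exact hex0) (by rw [r2]; exact hex1)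
      · exact g2 5 (by rw [r0]; exact hex6) (by rw [r2]; exact hex5)
      · exact g2 1 (by rw [r0]; exact hex2) (by rw [r2]; exact hex1)
      · exact g1 2 (by rw [r0]; exact hex2) (by rw [r2]; exact hex3)
      · exact g1 4 (by rw [r0]; exact hex4) (by rw [r2]; exact hex5)
      · exact g2 3 (by rw [r0]; exact hex4) (by rw [r2]; exact hex3)
  | n + 1, (w, σ) => by
      obtain ⟨t, ht, π, e⟩ := hc_TriSet n w
      refine ⟨_, Set.mem_iUnion₂.2 ⟨t, ht, sub_children t (π⁻¹ * σ)⟩, 1, ?_⟩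
      rw [tv_mk, e, sub_comp, hc_succ, mul_inv_cancel_left]; rfl

/-! ### Simplices of the triangulation and weighted energies -/

section Generic
variable {V ι : Type} [Fintype ι]

open Classical in
/-- The energy of a graph with finitely many edges is a finite sum over them. -/
lemma energy_eq (c : V → V → ℝ) (m : ι → V × V)
    (hsupp : ∀ p q, c p q ≠ 0 → ∃ x, m x = (p, q)) (f : V → ℝ) :
    energy c f = (1 / 2) * ∑ y ∈ Finset.univ.image m, c y.1 y.2 * (f y.1 - f y.2) ^ 2 := by
  set I := Finset.univ.image m with hI
  set S : Finset V := I.image Prod.fst ∪ I.image Prod.snd with hS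
  have hmem : ∀ p q, c p q * (f p - f q) ^ 2 ≠ 0 → (p, q) ∈ I := by
    intro p q h
    obtain ⟨x, hx⟩ := hsupp p q (left_ne_zero_of_mul h)
    exact Finset.mem_image.2 ⟨x, Finset.mem_univ _, hx⟩
  have hp : ∀ p q, (p, q) ∈ I → p ∈ S ∧ q ∈ S := fun p q h =>
    ⟨Finset.mem_union_left _ (Finset.mem_image_of_mem Prod.fst h),
      Finset.mem_union_right _ (Finset.mem_image_of_mem Prod.snd h)⟩
  have h1 : ∀ p, ∑' q, c p q * (f p - f q) ^ 2 = ∑ q ∈ S, c p q * (f p - f q) ^ 2 := fun p =>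
    tsum_eq_sum fun q hq => by
      by_contra h
      exact hq (hp p q (hmem p q h)).2
  have h2 : ∑' p, ∑' q, c p q * (f p - f q) ^ 2 =
      ∑ p ∈ S, ∑ q ∈ S, c p q * (f p - f q) ^ 2 := by
    simp only [h1]
    refine tsum_eq_sum fun p hp' => Finset.sum_eq_zero fun q _ => ?_
    by_contra h
    exact hp' (hp p q (hmem p q h)).1
  rw [energy, h2, ← Finset.sum_product']
  congr 1
  symm
  refine Finset.sum_subset (fun y hy => ?_) fun y _ hy => ?_
  · exact Finset.mem_product.2 (hp y.1 y.2 hy)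
  · by_contra h
    exact hy (hmem _ _ h)

open Classical in
lemma sum_fiber_bounds (m : ι → V × V) (G : V × V → ℝ) (hG : ∀ y, 0 ≤ G y) (N : ℕ)
    (hN : ∀ y, (Finset.univ.filter fun x => m x = y).card ≤ N) :
    ∑ y ∈ Finset.univ.image m, G y ≤ ∑ x, G (m x) ∧
      ∑ x, G (m x) ≤ N * ∑ y ∈ Finset.univ.image m, G y := by
  rw [Finset.sum_comp G m]
  constructor
  · refine Finset.sum_le_sum fun y hy => ?_
    obtain ⟨x, _, hx⟩ := Finset.mem_image.1 hy
    have : 1 ≤ (Finset.univ.filter fun x => m x = y).card :=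
      Finset.card_pos.2 ⟨x, Finset.mem_filter.2 ⟨Finset.mem_univ _, hx⟩⟩
    rw [nsmul_eq_mul]
    have h1 : (1:ℝ) ≤ ((Finset.univ.filter fun x => m x = y).card : ℝ) := by exact_mod_cast this
    exact le_mul_of_one_le_left (hG y) h1
  · rw [Finset.mul_sum]
    refine Finset.sum_le_sum fun y _ => ?_
    rw [nsmul_eq_mul]
    exact mul_le_mul_of_nonneg_right (by exact_mod_cast hN y) (hG y)

open Classical in
/-- Comparison of the energy of a weighted graph, with conductances between `k` and `K`, with the sum
over a list `m` of its oriented edges in which each one occurs once or twice. -/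
lemma energy_bounds (c : V → V → ℝ) (m : ι → V × V) (k K : ℝ) (hk : 0 < k)
    (hsupp : ∀ p q, c p q ≠ 0 → ∃ x, m x = (p, q))
    (hc : ∀ x, k ≤ c (m x).1 (m x).2 ∧ c (m x).1 (m x).2 ≤ K)
    (hN : ∀ x x' x'', m x = m x' → m x = m x'' → x = x' ∨ x = x'' ∨ x' = x'') (f : V → ℝ) :
    energy c f ≤ K / 2 * ∑ x, (f (m x).1 - f (m x).2) ^ 2 ∧
      k * ∑ x, (f (m x).1 - f (m x).2) ^ 2 ≤ 4 * energy c f := by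
  have hcard : ∀ y, (Finset.univ.filter fun x => m x = y).card ≤ 2 := by
    intro y
    by_contra h
    push Not at h
    obtain ⟨a, b, d, ha, hb, hd, h1, h2, h3⟩ := Finset.two_lt_card_iff.1 h
    simp only [Finset.mem_filter, Finset.mem_univ, true_and] at ha hb hd
    rcases hN a b d (by rw [ha, hb]) (by rw [ha, hd]) with h | h | h
    · exact h1 h
    · exact h2 h
    · exact h3 h
  obtain ⟨b1, b2⟩ := sum_fiber_bounds m (fun y => (f y.1 - f y.2) ^ 2) (fun y => sq_nonneg _) 2 hcard
  rw [energy_eq c m hsupp f]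
  have hcI : ∀ y ∈ Finset.univ.image m, k ≤ c y.1 y.2 ∧ c y.1 y.2 ≤ K := by
    intro y hy
    obtain ⟨x, _, rfl⟩ := Finset.mem_image.1 hy
    exact hc x
  set S := ∑ x, (f (m x).1 - f (m x).2) ^ 2
  have u1 : ∑ y ∈ Finset.univ.image m, c y.1 y.2 * (f y.1 - f y.2) ^ 2 ≤
      K * ∑ y ∈ Finset.univ.image m, (f y.1 - f y.2) ^ 2 := by
    rw [Finset.mul_sum]
    exact Finset.sum_le_sum fun y hy => mul_le_mul_of_nonneg_right (hcI y hy).2 (sq_nonneg _)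
  have u2 : k * ∑ y ∈ Finset.univ.image m, (f y.1 - f y.2) ^ 2 ≤
      ∑ y ∈ Finset.univ.image m, c y.1 y.2 * (f y.1 - f y.2) ^ 2 := by
    rw [Finset.mul_sum]
    exact Finset.sum_le_sum fun y hy => mul_le_mul_of_nonneg_right (hcI y hy).1 (sq_nonneg _)
  constructor
  · rcases isEmpty_or_nonempty ι with h | ⟨⟨x⟩⟩
    · have e : (Finset.univ.image m) = ∅ := by simp
      have e2 : S = 0 := Finset.sum_of_isEmpty _
      rw [e, e2]; simp
    · have hK : 0 ≤ K := hk.le.trans ((hc x).1.trans (hc x).2)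
      have := mul_le_mul_of_nonneg_left b1 hK
      linarith
  · have := mul_le_mul_of_nonneg_left b2 hk.le
    push_cast at this
    linarith

end Generic

/-- The edge of the cell `w` opposite to vertex `i`, in the hexagon. -/
def edg (n : ℕ) (w : W n) (i : Fin 3) : Set Pt := {hc n w (i + 1), hc n w (i + 2)}

/-- The vertex set of the cell `w`, in the hexagon. -/
def tri (n : ℕ) (w : W n) : Set Pt := Set.range (hc n w)

lemma set_tv (t : Pt × Pt × Pt) : ({t.1, t.2.1, t.2.2} : Set Pt) = Set.range (tv t) := by
  ext p
  simp [tv]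
  tauto

lemma range_perm (s : Fin 3 → Pt) (π : P3) : Set.range (fun i => s (π i)) = Set.range s :=
  π.surjective.range_comp s

lemma Simp2_eq (n : ℕ) : Simp2 (n+1) = Set.range (tri (n+1)) := by
  ext s
  constructor
  · rintro ⟨t, ht, rfl⟩
    obtain ⟨w, π, e⟩ := TriSet_hc n t ht
    exact ⟨w, by rw [set_tv, e, range_perm, tri]⟩
  · rintro ⟨w, rfl⟩
    obtain ⟨t, ht, π, e⟩ := hc_TriSet n w
    exact ⟨t, ht, by rw [set_tv, e, range_perm, tri]⟩

lemma fin3_third (a b : Fin 3) (h : a ≠ b) : ∃ i : Fin 3, (a = i + 1 ∧ b = i + 2) ∨ (a = i + 2 ∧ b = i + 1) := by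
  revert a b; decide

lemma pair_edg {n : ℕ} (w : W n) {a b : Fin 3} (h : a ≠ b) :
    ∃ i, ({hc n w a, hc n w b} : Set Pt) = edg n w i := by
  obtain ⟨i, ⟨rfl, rfl⟩ | ⟨rfl, rfl⟩⟩ := fin3_third a b h
  · exact ⟨i, rfl⟩
  · exact ⟨i, Set.pair_comm _ _⟩

lemma Simp1_eq (n : ℕ) : Simp1 (n+1) = {s | ∃ w i, s = edg (n+1) w i} := by
  ext s
  constructor
  · rintro ⟨t, ht, h⟩
    obtain ⟨w, π, e⟩ := TriSet_hc n t ht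
    have e0 : t.1 = hc (n+1) w (π 0) := congrFun e 0
    have e1 : t.2.1 = hc (n+1) w (π 1) := congrFun e 1
    have e2 : t.2.2 = hc (n+1) w (π 2) := congrFun e 2
    refine ⟨w, ?_⟩
    rcases h with rfl | rfl | rfl
    · rw [e0, e1]; exact pair_edg w (by simp)
    · rw [e1, e2]; exact pair_edg w (by simp)
    · rw [e0, e2]; exact pair_edg w (by simp)
  · rintro ⟨w, i, rfl⟩
    obtain ⟨t, ht, π, e⟩ := hc_TriSet n w
    refine ⟨t, ht, ?_⟩
    have f : ∀ j, hc (n+1) w j = tv t (π⁻¹ j) := fun j => by rw [e]; simp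
    rw [edg, f, f]
    have hne : π⁻¹ (i + 1) ≠ π⁻¹ (i + 2) := by
      rw [Ne, (π⁻¹).injective.eq_iff]; revert i; decide
    generalize π⁻¹ (i + 1) = a at hne
    generalize π⁻¹ (i + 2) = b at hne
    have c : ∀ a b : Pt, ({a, b} : Set Pt) = {b, a} := Set.pair_comm
    fin_cases a <;> fin_cases b <;>
      first
      | exact absurd rfl hne
      | exact Or.inl rfl
      | exact Or.inr (Or.inl rfl)
      | exact Or.inr (Or.inr rfl)
      | exact Or.inl (c _ _)
      | exact Or.inr (Or.inl (c _ _))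
      | exact Or.inr (Or.inr (c _ _))

lemma Simp0_eq (n : ℕ) : Simp0 (n+1) = {p | ∃ w i, p = hc (n+1) w i} := by
  ext p
  constructor
  · rintro ⟨t, ht, h⟩
    obtain ⟨w, π, e⟩ := TriSet_hc n t ht
    rcases h with rfl | rfl | rfl
    · exact ⟨w, _, congrFun e 0⟩
    · exact ⟨w, _, congrFun e 1⟩
    · exact ⟨w, _, congrFun e 2⟩
  · rintro ⟨w, i, rfl⟩
    obtain ⟨t, ht, π, e⟩ := hc_TriSet n w
    refine ⟨t, ht, ?_⟩
    have f : hc (n+1) w i = tv t (π⁻¹ i) := by rw [e]; simp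
    rw [f]
    generalize π⁻¹ i = a
    fin_cases a
    · exact Or.inl rfl
    · exact Or.inr (Or.inl rfl)
    · exact Or.inr (Or.inr rfl)

lemma hc_eq {n : ℕ} {w w' : W n} {i j : Fin 3} (h : hc n w i = hc n w' j) :
    i = j ∧ cl n w i = cl n w' j := by
  have := Psi_inj (cl_mem n w i) (cl_mem n w' j) h
  exact ⟨vtx_inj this, this⟩

lemma edg_sub_tri {n : ℕ} {w w' : W n} {i : Fin 3} (h : edg n w i ⊆ tri n w') :
    edg n w i = edg n w' i := by
  obtain ⟨j, hj⟩ := h (Set.mem_insert _ _)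
  obtain ⟨k, hk⟩ := h (Set.mem_insert_of_mem _ rfl)
  have a := (hc_eq hj).1
  have b := (hc_eq hk).1
  subst a; subst b
  rw [edg, edg, hj, hk]

lemma fin3_ne (i : Fin 3) : i + 1 ≠ i + 2 ∧ i + 1 ≠ i ∧ i + 2 ≠ i := by revert i; decide

lemma edg_sub_self {n : ℕ} (w : W n) (i : Fin 3) : edg n w i ⊆ tri n w := by
  rintro p (rfl | rfl) <;> exact ⟨_, rfl⟩

lemma edg_eq_iff {n : ℕ} {w w' : W n} {i j : Fin 3} :
    edg n w i = edg n w' j ↔ emid (cl n w) i = emid (cl n w') j := by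
  constructor
  · intro h
    rcases Set.pair_eq_pair_iff.1 h with ⟨h1, h2⟩ | ⟨h1, h2⟩
    · rw [emid, emid, (hc_eq h1).2, (hc_eq h2).2]
    · rw [emid, emid, (hc_eq h1).2, (hc_eq h2).2, md_comm]
  · intro h
    obtain ⟨rfl, h2⟩ := emid_inj h
    have f := fin3_ne i
    rw [edg, edg, hc, hc, h2 _ f.2.1, h2 _ f.2.2]; rfl

lemma tri_sub {n : ℕ} {w w' : W n} (h : tri n w ⊆ tri n w') : w = w' := by
  apply tri_inj
  funext i
  obtain ⟨j, hj⟩ := h ⟨i, rfl⟩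
  have := hc_eq hj
  obtain ⟨rfl, h2⟩ := this
  exact h2.symm

lemma tri_eq_iff {n : ℕ} {w w' : W n} : tri n w = tri n w' ↔ w = w' :=
  ⟨fun h => tri_sub h.le, fun h => by rw [h]⟩

lemma edg_ne_tri {n : ℕ} {w w' : W n} {i : Fin 3} : edg n w i ≠ tri n w' := by
  intro h
  have : hc n w' i ∈ edg n w i := h ▸ ⟨i, rfl⟩
  have f := fin3_ne i
  rcases this with h | h
  · exact f.2.1 (hc_eq h).1.symm
  · exact f.2.2 (hc_eq h).1.symm

/-! ### Energies of the two graphs -/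

/-- The list of oriented edges of `G_n^T`, by cell, opposite vertex and orientation. -/
def mT (n : ℕ) (x : W n × Fin 3 × Bool) : Pt × Pt :=
  if x.2.2 then (hc n x.1 (x.2.1 + 2), hc n x.1 (x.2.1 + 1))
  else (hc n x.1 (x.2.1 + 1), hc n x.1 (x.2.1 + 2))

/-- The list of oriented edges of `G_n^H`, by triangle, side and orientation. -/
def mH (n : ℕ) (x : W n × Fin 3 × Bool) : Set Pt × Set Pt :=
  if x.2.2 then (edg n x.1 x.2.1, tri n x.1) else (tri n x.1, edg n x.1 x.2.1)

lemma sum_bool {n : ℕ} (G : W n × Fin 3 × Bool → ℝ) (F : W n → Fin 3 → ℝ)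
    (h : ∀ w i b, G (w, i, b) = F w i) : ∑ x, G x = 2 * ∑ w, ∑ i, F w i := by
  rw [Fintype.sum_prod_type, Finset.mul_sum]
  refine Finset.sum_congr rfl fun w _ => ?_
  rw [Fintype.sum_prod_type, Finset.mul_sum]
  refine Finset.sum_congr rfl fun i _ => ?_
  rw [Fintype.sum_bool, h, h]; ring

lemma mT_type {n : ℕ} {x y : W n × Fin 3 × Bool} (h : mT n x = mT n y) :
    x.2 = y.2 ∧ cl n x.1 (x.2.1 + 1) = cl n y.1 (x.2.1 + 1) ∧
      cl n x.1 (x.2.1 + 2) = cl n y.1 (x.2.1 + 2) := by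
  obtain ⟨w, i, b⟩ := x
  obtain ⟨w', i', b'⟩ := y
  have no : ∀ i j : Fin 3, i + 1 = j + 2 → i + 2 = j + 1 → False := by decide
  cases b <;> cases b' <;>
    simp only [mT, if_true, if_false, Prod.mk.injEq, Bool.false_eq_true] at h <;>
    obtain ⟨h1, h2⟩ := h <;> have e1 := hc_eq h1 <;> have e2 := hc_eq h2
  · have := add_right_cancel e1.1; subst this
    exact ⟨rfl, e1.2, e2.2⟩
  · exact (no _ _ e1.1 e2.1).elim
  · exact (no _ _ e2.1 e1.1).elim
  · have := add_right_cancel e1.1; subst this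
    exact ⟨rfl, e2.2, e1.2⟩

/-- An edge belongs to at most two cells: among three cells with a common edge, two would have equal
orientation. -/
lemma mT_fiber {n : ℕ} (x x' x'' : W n × Fin 3 × Bool) (h : mT n x = mT n x')
    (h' : mT n x = mT n x'') : x = x' ∨ x = x'' ∨ x' = x'' := by
  obtain ⟨a1, a2, a3⟩ := mT_type h
  obtain ⟨b1, b2, b3⟩ := mT_type h'
  by_contra! hne
  obtain ⟨n1, n2, n3⟩ := hne
  have w1 : x.1 ≠ x'.1 := fun e => n1 (Prod.ext e a1)
  have w2 : x.1 ≠ x''.1 := fun e => n2 (Prod.ext e b1)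
  have w3 : x'.1 ≠ x''.1 := fun e => n3 (Prod.ext e (a1.symm.trans b1))
  have s1 := (shared_edge n _ _ _ w1 a2 a3).1
  have s2 := (shared_edge n _ _ _ w2 b2 b3).1
  have s3 := (shared_edge n _ _ _ w3 (a2.symm.trans b2) (a3.symm.trans b3)).1
  rw [s1, s2, neg_neg] at s3
  exact units_ne_neg_self _ s3.symm

/-- The energy on `G_n^T` is comparable to `ET`. -/
lemma cT_bounds (n : ℕ) (f : Pt → ℝ) :
    energy (cT (n+1)) f ≤ 2 * ET (n+1) (fun x => f (Psi x)) ∧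
      ET (n+1) (fun x => f (Psi x)) ≤ 2 * energy (cT (n+1)) f := by
  have hsum : ∑ x, (f (mT (n+1) x).1 - f (mT (n+1) x).2) ^ 2 =
      2 * ET (n+1) (fun x => f (Psi x)) := by
    refine sum_bool _ _ fun w i b => ?_
    cases b <;> simp only [mT, if_true, if_false, Bool.false_eq_true, hc]
    ring
  have hb := energy_bounds (cT (n+1)) (mT (n+1)) 1 2 one_pos ?_ ?_ mT_fiber f
  · rw [hsum] at hb
    constructor <;> linarith [hb.1, hb.2]
  · intro p q h
    rw [cT] at h
    have hpq : p ≠ q ∧ ({p, q} : Set Pt) ∈ Simp1 (n+1) := by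
      by_contra hn; exact h (if_neg hn)
    obtain ⟨_, hs⟩ := hpq
    rw [Simp1_eq] at hs
    obtain ⟨w, i, e⟩ := hs
    rcases Set.pair_eq_pair_iff.1 e with ⟨rfl, rfl⟩ | ⟨rfl, rfl⟩
    · exact ⟨(w, i, false), rfl⟩
    · exact ⟨(w, i, true), rfl⟩
  · rintro ⟨w, i, b⟩
    have hne : hc (n+1) w (i + 1) ≠ hc (n+1) w (i + 2) := fun h => (fin3_ne i).1 (hc_eq h).1
    have hmem : edg (n+1) w i ∈ Simp1 (n+1) := by rw [Simp1_eq]; exact ⟨w, i, rfl⟩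
    have hcond : (mT (n+1) (w, i, b)).1 ≠ (mT (n+1) (w, i, b)).2 ∧
        ({(mT (n+1) (w, i, b)).1, (mT (n+1) (w, i, b)).2} : Set Pt) ∈ Simp1 (n+1) := by
      cases b
      · exact ⟨hne, hmem⟩
      · exact ⟨hne.symm, by rw [Set.pair_comm]; exact hmem⟩
    rw [cT, if_pos hcond]
    split_ifs <;> norm_num

/-- Sum of the squared differences over all incidences of an edge and a cell. -/
def ES (n : ℕ) (U : Set Pt → ℝ) : ℝ := ∑ w : W n, ∑ i : Fin 3, (U (edg n w i) - U (tri n w)) ^ 2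

lemma mH_inj {n : ℕ} : Function.Injective (mH n) := by
  rintro ⟨w, i, b⟩ ⟨w', i', b'⟩ h
  cases b <;> cases b' <;>
    simp only [mH, if_true, if_false, Prod.mk.injEq, Bool.false_eq_true] at h <;>
    obtain ⟨h1, h2⟩ := h
  · rw [tri_eq_iff] at h1; rw [edg_eq_iff] at h2
    rw [h1, (emid_inj h2).1]
  · exact (edg_ne_tri h2).elim
  · exact (edg_ne_tri h1).elim
  · rw [tri_eq_iff] at h2; rw [edg_eq_iff] at h1
    rw [h2, (emid_inj h1).1]

/-- The energy on `G_n^H` is comparable to `ES`. -/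
lemma cH_bounds (n : ℕ) (U : Set Pt → ℝ) :
    energy (cH (n+1)) U ≤ 2⁻¹ * ES (n+1) U ∧ ES (n+1) U ≤ 4 * energy (cH (n+1)) U := by
  have hsum : ∑ x, (U (mH (n+1) x).1 - U (mH (n+1) x).2) ^ 2 = 2 * ES (n+1) U := by
    refine sum_bool _ _ fun w i b => ?_
    cases b <;> simp only [mH, if_true, if_false, Bool.false_eq_true]
    ring
  have hb := energy_bounds (cH (n+1)) (mH (n+1)) (1/2) (1/2) one_half_pos ?_ ?_
    (fun x x' x'' h _ => Or.inl (mH_inj h)) U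
  · rw [hsum] at hb
    constructor <;> linarith [hb.1, hb.2]
  · intro u v h
    rw [cH] at h
    have hor : (u ∈ Simp1 (n+1) ∧ v ∈ Simp2 (n+1) ∧ u ⊆ v) ∨
        (v ∈ Simp1 (n+1) ∧ u ∈ Simp2 (n+1) ∧ v ⊆ u) := by
      by_contra hn; exact h (if_neg hn)
    rw [Simp1_eq, Simp2_eq] at hor
    rcases hor with ⟨⟨w, i, rfl⟩, ⟨w', rfl⟩, hs⟩ | ⟨⟨w, i, rfl⟩, ⟨w', rfl⟩, hs⟩
    · exact ⟨(w', i, true), by rw [edg_sub_tri hs]; rfl⟩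
    · exact ⟨(w', i, false), by rw [edg_sub_tri hs]; rfl⟩
  · rintro ⟨w, i, b⟩
    have h1 : edg (n+1) w i ∈ Simp1 (n+1) := by rw [Simp1_eq]; exact ⟨w, i, rfl⟩
    have h2 : tri (n+1) w ∈ Simp2 (n+1) := by rw [Simp2_eq]; exact ⟨w, rfl⟩
    have h3 := edg_sub_self w i
    have : cH (n+1) (mH (n+1) (w, i, b)).1 (mH (n+1) (w, i, b)).2 = 1 / 2 := by
      rw [cH, if_pos]
      cases b
      · exact Or.inr ⟨h1, h2, h3⟩
      · exact Or.inl ⟨h1, h2, h3⟩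
    rw [this]; exact ⟨le_rfl, le_rfl⟩

/-! ### Resistance of the triangulation graph -/

/-- Conductance between two sets: the infimum in the definition of the effective resistance. -/
def cap {V : Type} (c : V → V → ℝ) (A B : Set V) : ℝ :=
  sInf {e : ℝ | ∃ f : V → ℝ, (∀ p ∈ A, f p = 0) ∧ (∀ p ∈ B, f p = 1) ∧ e = energy c f}

lemma cap_le {V : Type} {c : V → V → ℝ} {A B : Set V} (hc : ∀ f, 0 ≤ energy c f) {f : V → ℝ}
    (hA : ∀ p ∈ A, f p = 0) (hB : ∀ p ∈ B, f p = 1) : cap c A B ≤ energy c f :=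
  csInf_le ⟨0, by rintro e ⟨f, _, _, rfl⟩; exact hc f⟩ ⟨f, hA, hB, rfl⟩

lemma le_cap {V : Type} {c : V → V → ℝ} {A B : Set V} {f : V → ℝ} {r : ℝ}
    (hA : ∀ p ∈ A, f p = 0) (hB : ∀ p ∈ B, f p = 1)
    (h : ∀ f : V → ℝ, (∀ p ∈ A, f p = 0) → (∀ p ∈ B, f p = 1) → r ≤ energy c f) : r ≤ cap c A B :=
  le_csInf ⟨_, f, hA, hB, rfl⟩ (by rintro e ⟨f, a, b, rfl⟩; exact h f a b)

lemma cT_nonneg (n : ℕ) (f : Pt → ℝ) : 0 ≤ energy (cT (n+1)) f := by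
  have := (cT_bounds n f).2
  have := ET_nonneg (n+1) (fun x => f (Psi x))
  linarith

lemma cH_nonneg (n : ℕ) (U : Set Pt → ℝ) : 0 ≤ energy (cH (n+1)) U := by
  have := (cH_bounds n U).2
  have : 0 ≤ ES (n+1) U := Finset.sum_nonneg fun _ _ => Finset.sum_nonneg fun _ _ => sq_nonneg _
  linarith

/-- The conductance whose inverse is `RT`. -/
abbrev capT (n : ℕ) : ℝ := cap (cT n) (LsetT n 2) (LsetT n 5)
/-- The conductance whose inverse is `RH`. -/
abbrev capH (n : ℕ) : ℝ := cap (cH n) (LsetH n 0 ∪ LsetH n 1) (LsetH n 3 ∪ LsetH n 4)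

/-- A test function on the simplex gives one on the hexagon. -/
lemma push_T (n : ℕ) {g : X → ℝ} (hg : TestT 0 1 g) : ∃ f : Pt → ℝ,
    (∀ p ∈ LsetT (n+1) 2, f p = 0) ∧ (∀ p ∈ LsetT (n+1) 5, f p = 1) ∧
    ET (n+1) (fun x => f (Psi x)) = ET (n+1) g := by
  have hinv : ∀ x ∈ Splx, g (Function.invFunOn Psi Splx (Psi x)) = g x := fun x hx => by
    rw [Psi_inj.leftInvOn_invFunOn hx]
  refine ⟨fun p => g (Function.invFunOn Psi Splx p), ?_, ?_, ?_⟩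
  · rintro p ⟨hp, hs⟩
    rw [Simp0_eq] at hp
    obtain ⟨w, i, rfl⟩ := hp
    have := (side2 (cl_mem _ w i)).1 hs
    exact (hinv _ (cl_mem _ w i)).trans (hg.1 _ this)
  · rintro p ⟨hp, hs⟩
    rw [Simp0_eq] at hp
    obtain ⟨w, i, rfl⟩ := hp
    have := (side5 (cl_mem _ w i)).1 hs
    exact (hinv _ (cl_mem _ w i)).trans (hg.2 _ this)
  · exact Finset.sum_congr rfl fun w _ => dE_congr fun i => hinv _ (cl_mem _ w i)

/-- A test function on the hexagon gives one on the simplex. It has to be redefined at points of the half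
sides that are not vertices. -/
lemma pull_T (n : ℕ) {f : Pt → ℝ} (h0 : ∀ p ∈ LsetT (n+1) 2, f p = 0)
    (h1 : ∀ p ∈ LsetT (n+1) 5, f p = 1) : ∃ g, TestT 0 1 g ∧
    ET (n+1) (fun x => f (Psi x)) = ET (n+1) g := by
  refine ⟨_, testT_clampT 0 1 (fun x => f (Psi x)), ?_⟩
  refine Finset.sum_congr rfl fun w _ => dE_congr fun i => ?_
  have hm : Psi (cl (n+1) w i) ∈ Simp0 (n+1) := by rw [Simp0_eq]; exact ⟨w, i, rfl⟩
  rw [clampT]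
  split_ifs with ha hb
  · exact h0 _ ⟨hm, (side2 (cl_mem _ w i)).2 ha⟩
  · exact h1 _ ⟨hm, (side5 (cl_mem _ w i)).2 hb⟩
  · rfl

/-- `RT` is comparable to the inverse of `CT`. -/
lemma capT_bounds (n : ℕ) : CT (n+1) ≤ 2 * capT (n+1) ∧ capT (n+1) ≤ 2 * CT (n+1) := by
  constructor
  · obtain ⟨f, hA, hB, -⟩ := push_T n (testT_clampT 0 1 0)
    have : CT (n+1) / 2 ≤ capT (n+1) := by
      refine le_cap hA hB fun f h0 h1 => ?_
      obtain ⟨g, hg, e⟩ := pull_T n h0 h1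
      have a := CT_le (n := n+1) hg
      have b := (cT_bounds n f).2
      linarith
    linarith
  · have : capT (n+1) / 2 ≤ CT (n+1) := by
      refine le_csInf (CT_ne _) ?_
      rintro e ⟨g, hg, rfl⟩
      obtain ⟨f, hA, hB, e⟩ := push_T n hg
      have a := cap_le (cT_nonneg n) hA hB
      have b := (cT_bounds n f).1
      have c : capT (n+1) ≤ energy (cT (n+1)) f := a
      linarith
    linarith

/-! ### Resistance of the hexacarpet graph -/

/-- An edge lies in a side of the hexagon if and only if its midpoint lies in the corresponding half
side of the simplex. -/
lemma edge_side {n : ℕ} {w : W (n+1)} {i : Fin 3} {k : ℕ} {a b : Fin 3} (hab : a ≠ b)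
    (hk : ∀ {x : X}, x ∈ Splx → (Psi x ∈ hexSide k ↔ x ∈ hs a b)) :
    edg (n+1) w i ∈ LsetH (n+1) k ↔ emid (cl (n+1) w) i ∈ hs a b := by
  have hm : edg (n+1) w i ∈ Simp2 (n+1) ∪ Simp1 (n+1) :=
    Or.inr (by rw [Simp1_eq]; exact ⟨w, i, rfl⟩)
  rw [emid_hs_iff hab, ← hk (cl_mem _ _ _), ← hk (cl_mem _ _ _)]
  constructor
  · rintro ⟨_, h⟩
    have h' := (subset_convexHull ℝ _).trans h
    exact ⟨h' (Set.mem_insert _ _), h' (Set.mem_insert_of_mem _ rfl)⟩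
  · rintro ⟨h1, h2⟩
    refine ⟨hm, convexHull_min ?_ (convex_segment _ _)⟩
    rintro p (rfl | rfl)
    · exact h1
    · exact h2

/-- No triangle lies in a side of the hexagon: its third vertex is interior. -/
lemma tri_side {n : ℕ} {w : W (n+1)} {k : ℕ} {a b : Fin 3} (hab : a ≠ b)
    (hk : ∀ {x : X}, x ∈ Splx → (Psi x ∈ hexSide k ↔ x ∈ hs a b)) :
    tri (n+1) w ∉ LsetH (n+1) k := by
  rintro ⟨_, h⟩
  have h' := (subset_convexHull ℝ _).trans h
  have h2 : Psi (cl (n+1) w 2) ∈ hexSide k := h' ⟨2, rfl⟩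
  exact not_hs_of_pos hab (vtx2_pos n w) ((hk (cl_mem _ _ _)).1 h2)

lemma sA_iff {x : X} : x ∈ sA ↔ x ∈ hs 0 1 ∨ x ∈ hs 1 0 := by
  constructor
  · rintro ⟨h, h2⟩
    have := h.2
    rcases le_total (x 1) (x 0) with h | h
    · exact Or.inl ⟨‹_›, by linarith, h⟩
    · exact Or.inr ⟨‹_›, by linarith, h⟩
  · rintro (⟨h, h1, _⟩ | ⟨h, h1, _⟩) <;> exact ⟨h, by linarith [h.2]⟩

lemma edge_A {n : ℕ} {w : W (n+1)} {i : Fin 3} :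
    edg (n+1) w i ∈ LsetH (n+1) 0 ∪ LsetH (n+1) 1 ↔ emid (cl (n+1) w) i ∈ sA := by
  rw [sA_iff, Set.mem_union, edge_side (by decide) side0, edge_side (by decide) side1]

lemma edge_B {n : ℕ} {w : W (n+1)} {i : Fin 3} :
    edg (n+1) w i ∈ LsetH (n+1) 3 ∪ LsetH (n+1) 4 ↔ emid (cl (n+1) w) i ∈ sB := by
  rw [sB, Set.mem_union, Set.mem_union, edge_side (by decide) side3, edge_side (by decide) side4]

lemma ctr_notin {n : ℕ} {w : W n} : ctr (cl n w) ∉ sA ∧ ctr (cl n w) ∉ sB := by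
  have h := ctr_pos n w
  refine ⟨fun h' => (h 2).ne' h'.2, ?_⟩
  rintro (h' | h')
  · exact not_hs_of_pos (by decide) h h'
  · exact not_hs_of_pos (by decide) h h'

/-- The barycentre, in the simplex, of a vertex of the hexacarpet graph (an edge or a triangle). -/
def ptH (n : ℕ) : (W n × Fin 3) ⊕ W n → X :=
  Sum.elim (fun x => emid (cl n x.1) x.2) (fun w => ctr (cl n w))

/-- The same edge or triangle as a face in the hexagon. -/
def stH (n : ℕ) : (W n × Fin 3) ⊕ W n → Set Pt :=
  Sum.elim (fun x => edg n x.1 x.2) (fun w => tri n w)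

lemma ptH_stH {n : ℕ} (x y : (W n × Fin 3) ⊕ W n) : ptH n x = ptH n y ↔ stH n x = stH n y := by
  rcases x with x | x <;> rcases y with y | y <;> simp only [ptH, stH, Sum.elim_inl, Sum.elim_inr]
  · exact edg_eq_iff.symm
  · exact ⟨fun h => (emid_ne_ctr h).elim, fun h => (edg_ne_tri h).elim⟩
  · exact ⟨fun h => (emid_ne_ctr h.symm).elim, fun h => (edg_ne_tri h.symm).elim⟩
  · rw [tri_eq_iff]; exact ⟨ctr_inj, fun h => by rw [h]⟩

/-- An admissible potential on midpoints and centres gives one on the hexacarpet graph. -/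
lemma push_H (n : ℕ) {U : X → ℝ} (hU : TestH U) : ∃ V : Set Pt → ℝ,
    (∀ p ∈ LsetH (n+1) 0 ∪ LsetH (n+1) 1, V p = 0) ∧
    (∀ p ∈ LsetH (n+1) 3 ∪ LsetH (n+1) 4, V p = 1) ∧ ES (n+1) V = EH (n+1) U := by
  have hf : Function.FactorsThrough (fun x => U (ptH (n+1) x)) (stH (n+1)) := fun x y h => by
    simp only [(ptH_stH x y).2 h]
  set V := Function.extend (stH (n+1)) (fun x => U (ptH (n+1) x)) 0 with hV
  have hE : ∀ w i, V (edg (n+1) w i) = U (emid (cl (n+1) w) i) := fun w i =>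
    hf.extend_apply 0 (Sum.inl (w, i))
  have hT : ∀ w, V (tri (n+1) w) = U (ctr (cl (n+1) w)) := fun w =>
    hf.extend_apply 0 (Sum.inr w)
  have face : ∀ k p, p ∈ LsetH (n+1) k → (∃ w i, p = edg (n+1) w i) ∨ ∃ w, p = tri (n+1) w := by
    rintro k p ⟨h | h, _⟩
    · rw [Simp2_eq] at h; obtain ⟨w, rfl⟩ := h; exact Or.inr ⟨w, rfl⟩
    · rw [Simp1_eq] at h; exact Or.inl h
  refine ⟨V, ?_, ?_, ?_⟩
  · intro p hp
    have : (∃ w i, p = edg (n+1) w i) ∨ ∃ w, p = tri (n+1) w := hp.elim (face _ _) (face _ _)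
    rcases this with ⟨w, i, rfl⟩ | ⟨w, rfl⟩
    · rw [hE]; exact hU.1 _ (edge_A.1 hp)
    · exact (hp.elim (tri_side (by decide) side0) (tri_side (by decide) side1)).elim
  · intro p hp
    have : (∃ w i, p = edg (n+1) w i) ∨ ∃ w, p = tri (n+1) w := hp.elim (face _ _) (face _ _)
    rcases this with ⟨w, i, rfl⟩ | ⟨w, rfl⟩
    · rw [hE]; exact hU.2 _ (edge_B.1 hp)
    · exact (hp.elim (tri_side (by decide) side3) (tri_side (by decide) side4)).elim
  · refine Finset.sum_congr rfl fun w _ => Finset.sum_congr rfl fun i _ => ?_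
    rw [hE, hT]

open Classical in
/-- A potential on the hexacarpet graph gives an admissible one on midpoints and centres. -/
lemma pull_H (n : ℕ) {V : Set Pt → ℝ} (h0 : ∀ p ∈ LsetH (n+1) 0 ∪ LsetH (n+1) 1, V p = 0)
    (h1 : ∀ p ∈ LsetH (n+1) 3 ∪ LsetH (n+1) 4, V p = 1) :
    ∃ U, TestH U ∧ ES (n+1) V = EH (n+1) U := by
  have hf : Function.FactorsThrough (fun x => V (stH (n+1) x)) (ptH (n+1)) := fun x y h => by
    simp only [(ptH_stH x y).1 h]
  set Z := Function.extend (ptH (n+1)) (fun x => V (stH (n+1) x)) 0 with hZ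
  have hE : ∀ w i, Z (emid (cl (n+1) w) i) = V (edg (n+1) w i) := fun w i =>
    hf.extend_apply 0 (Sum.inl (w, i))
  have hT : ∀ w, Z (ctr (cl (n+1) w)) = V (tri (n+1) w) := fun w =>
    hf.extend_apply 0 (Sum.inr w)
  refine ⟨fun x => if x ∈ sA then 0 else if x ∈ sB then 1 else Z x,
    ⟨fun x hx => if_pos hx, fun x hx => ?_⟩, ?_⟩
  · simp only [if_neg fun h => sA_sB h hx, if_pos hx]
  · refine Finset.sum_congr rfl fun w _ => Finset.sum_congr rfl fun i _ => ?_
    have eT : (if ctr (cl (n+1) w) ∈ sA then (0:ℝ) else if ctr (cl (n+1) w) ∈ sB then 1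
        else Z (ctr (cl (n+1) w))) = V (tri (n+1) w) := by
      rw [if_neg ctr_notin.1, if_neg ctr_notin.2, hT]
    have eE : (if emid (cl (n+1) w) i ∈ sA then (0:ℝ) else if emid (cl (n+1) w) i ∈ sB then 1
        else Z (emid (cl (n+1) w) i)) = V (edg (n+1) w i) := by
      split_ifs with ha hb
      · exact (h0 _ (edge_A.2 ha)).symm
      · exact (h1 _ (edge_B.2 hb)).symm
      · exact hE w i
    simp only [eT, eE]

/-- By duality, `RH` is comparable to `CT`. -/
lemma capH_bounds (n : ℕ) : 1 ≤ 4 * (CT (n+1) * capH (n+1)) ∧ CT (n+1) * capH (n+1) ≤ 1 := by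
  have hC := CT_pos n
  constructor
  · obtain ⟨V, hA, hB, -⟩ := push_H n testH_indB
    have : 1 / (4 * CT (n+1)) ≤ capH (n+1) := by
      refine le_cap hA hB fun V h0 h1 => ?_
      obtain ⟨U, hU, e⟩ := pull_H n h0 h1
      have b := (cH_bounds n V).2
      rw [e] at b
      have hE := cH_nonneg n V
      rcases hE.eq_or_lt with h | hpos
      · exfalso
        have := ET_mul_EH n (testT_clampT 0 1 0) hU
        have e0 : EH (n+1) U = 0 := le_antisymm (by linarith) (EH_nonneg _ _)
        rw [e0] at this; norm_num at this
      · have : 1 / (4 * energy (cH (n+1)) V) ≤ CT (n+1) := by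
          refine le_csInf (CT_ne _) ?_
          rintro e ⟨g, hg, rfl⟩
          rw [div_le_iff₀ (by positivity)]
          have h1 := ET_mul_EH n hg hU
          have h2 := mul_le_mul_of_nonneg_left b (ET_nonneg (n+1) g)
          linarith
        rw [div_le_iff₀ (by positivity)] at this ⊢
        linarith
    rw [div_le_iff₀ (by positivity)] at this
    linarith
  · obtain ⟨G, U, hG, hU, h⟩ := dual n
    obtain ⟨V, hA, hB, e⟩ := push_H n hU
    have a : capH (n+1) ≤ energy (cH (n+1)) V := cap_le (cH_nonneg n) hA hB
    have b := (cH_bounds n V).1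
    rw [e] at b
    have c := CT_le (n := n+1) hG
    have d := EH_nonneg (n+1) U
    have h1 : CT (n+1) * capH (n+1) ≤ CT (n+1) * EH (n+1) U :=
      mul_le_mul_of_nonneg_left (by linarith) hC.le
    have h2 : CT (n+1) * EH (n+1) U ≤ ET (n+1) G * EH (n+1) U := mul_le_mul_of_nonneg_right c d
    linarith

/-- The exponential growth rate is unchanged by bounded factors. -/
lemma log_limit {a x : ℕ → ℝ} {L : ℝ}
    (ha : Filter.Tendsto (fun n : ℕ => Real.log (a n) / n) Filter.atTop (nhds L))
    (hpos : ∀ n, 0 < a (n+1)) (h1 : ∀ n, a (n+1) ≤ 4 * x (n+1)) (h2 : ∀ n, x (n+1) ≤ 4 * a (n+1)) :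
    Filter.Tendsto (fun n : ℕ => Real.log (x n) / n) Filter.atTop (nhds L) := by
  have h0 : Filter.Tendsto (fun n : ℕ => Real.log 4 / (n:ℝ)) Filter.atTop (nhds 0) :=
    tendsto_const_div_atTop_nhds_zero_nat _
  have lo := ha.sub h0
  have hi := ha.add h0
  rw [sub_zero] at lo
  rw [add_zero] at hi
  have hx : ∀ n, 0 < x (n+1) := fun n => by linarith [hpos n, h1 n]
  refine tendsto_of_tendsto_of_tendsto_of_le_of_le' lo hi ?_ ?_
  · filter_upwards [Filter.eventually_ge_atTop 1] with n hn
    obtain ⟨m, rfl⟩ := Nat.exists_eq_add_of_le' hn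
    rw [← sub_div]
    refine div_le_div_of_nonneg_right ?_ (Nat.cast_nonneg _)
    have := Real.log_le_log (hpos m) (h1 m)
    rw [Real.log_mul (by norm_num) (hx m).ne'] at this
    linarith
  · filter_upwards [Filter.eventually_ge_atTop 1] with n hn
    obtain ⟨m, rfl⟩ := Nat.exists_eq_add_of_le' hn
    rw [← add_div]
    refine div_le_div_of_nonneg_right ?_ (Nat.cast_nonneg _)
    have := Real.log_le_log (hx m) (h2 m)
    rw [Real.log_mul (by norm_num) (hpos m).ne'] at this
    linarith

/-- Both growth rates are determined by that of the capacity `CT`. -/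
theorem main_aux : ∃ L : ℝ,
    Filter.Tendsto (fun n : ℕ => Real.log (RH n) / n) Filter.atTop (nhds L) ∧
    Filter.Tendsto (fun n : ℕ => Real.log (RT n) / n) Filter.atTop (nhds (-L)) := by
  obtain ⟨L, hL⟩ := CT_limit
  refine ⟨L, log_limit hL CT_pos (fun n => ?_) (fun n => ?_), ?_⟩
  · have e : RH (n+1) = (capH (n+1))⁻¹ := rfl
    obtain ⟨h1, h2⟩ := capH_bounds n
    have hC := CT_pos n
    have hp : 0 < capH (n+1) := pos_of_mul_pos_right (by linarith : 0 < CT (n+1) * capH (n+1)) hC.le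
    rw [e, ← div_eq_mul_inv, le_div_iff₀ hp]
    linarith
  · have e : RH (n+1) = (capH (n+1))⁻¹ := rfl
    obtain ⟨h1, h2⟩ := capH_bounds n
    have hC := CT_pos n
    have hp : 0 < capH (n+1) := pos_of_mul_pos_right (by linarith : 0 < CT (n+1) * capH (n+1)) hC.le
    rw [e, inv_le_iff_one_le_mul₀ hp]
    linarith
  · have h : Filter.Tendsto (fun n : ℕ => Real.log (capT n) / n) Filter.atTop (nhds L) := by
      refine log_limit hL CT_pos (fun n => ?_) (fun n => ?_)
      · have := (capT_bounds n).1; have := (capT_bounds n).2; have := CT_pos n; linarith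
      · have := (capT_bounds n).2; have := CT_pos n; linarith
    refine h.neg.congr fun n => ?_
    have e : RT n = (capT n)⁻¹ := rfl
    rw [e, Real.log_inv, neg_div]

end BarycentricHexacarpet

namespace BarycentricHexacarpet

/-- The resistance scaling factors are reciprocal: `ρ^T = 1/ρ`, that is,
`lim (1/n) log R_n^T = - lim (1/n) log R_n`. -/
theorem scaling_factors_reciprocal :
    ∃ L : ℝ,
      Filter.Tendsto (fun n : ℕ => Real.log (RH n) / n) Filter.atTop (nhds L) ∧
      Filter.Tendsto (fun n : ℕ => Real.log (RT n) / n) Filter.atTop (nhds (-L)) := by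
  exact main_aux

end BarycentricHexacarpet
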